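/- arXiv:math/0403171 — 3 statements merged into one kernel-verified Lean document; each statement's English description precedes it below -/
import Mathlib

section
/- Braid relations for Pitman transforms: let V be a finite-dimensional real vector space with dual space V∨, T > 0, and let α, β ∈ V and α∨, β∨ ∈ V∨ satisfy α∨(α) = β∨(β) = 2, α∨(β) < 0, β∨(α) < 0, and α∨(β)·β∨(α) = 4 cos²(π/n) for some integer n ≥ 2. Then P_α P_β P_α ⋯ = P_β P_α P_β ⋯, where each side is the composition of n alternating factors, as transformations of the set of continuous paths π : [0,T] → V with π(0) = 0. -/
/-- The Pitman transform associated with a pair `(α, α∨)`: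
`P_α π (t) = π t − (inf_{0 ≤ s ≤ t} α∨(π s)) • α`. -/
noncomputable def pitman {V : Type*} [AddCommGroup V] [Module ℝ V]
    (α : V) (αv : Module.Dual ℝ V) (π : ℝ → V) : ℝ → V :=
  fun t => π t - sInf ((fun s => αv (π s)) '' Set.Icc 0 t) • α

/-- `altComp P Q n` is the alternating composition `P ∘ Q ∘ P ∘ ⋯` with `n` factors. -/
def altComp {X : Type*} (P Q : X → X) : ℕ → (X → X)
  | 0 => id
  | n + 1 => P ∘ altComp Q P n

open Set

/-- running infimum -/
noncomputable def rInf (f : ℝ → ℝ) (t : ℝ) : ℝ := sInf (f '' Icc 0 t)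

lemma rInf_bdd {T t : ℝ} {f : ℝ → ℝ} (hf : ContinuousOn f (Icc 0 T)) (ht : t ≤ T) :
    BddBelow (f '' Icc 0 t) :=
  (isCompact_Icc.image_of_continuousOn (hf.mono (Icc_subset_Icc_right ht))).bddBelow

lemma rInf_le {T t s : ℝ} {f : ℝ → ℝ} (hf : ContinuousOn f (Icc 0 T)) (ht : t ≤ T)
    (h0 : 0 ≤ s) (hs : s ≤ t) : rInf f t ≤ f s :=
  csInf_le (rInf_bdd hf ht) ⟨s, ⟨h0, hs⟩, rfl⟩

lemma le_rInf {t b : ℝ} {f : ℝ → ℝ} (ht : 0 ≤ t) (h : ∀ s, 0 ≤ s → s ≤ t → b ≤ f s) :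
    b ≤ rInf f t := by
  refine le_csInf ⟨f 0, 0, ⟨le_rfl, ht⟩, rfl⟩ ?_
  rintro _ ⟨s, hs, rfl⟩
  exact h s hs.1 hs.2

lemma rInf_mem {T t : ℝ} {f : ℝ → ℝ} (hf : ContinuousOn f (Icc 0 T)) (h0 : 0 ≤ t) (ht : t ≤ T) :
    ∃ s, 0 ≤ s ∧ s ≤ t ∧ f s = rInf f t := by
  have := (isCompact_Icc.image_of_continuousOn (hf.mono (Icc_subset_Icc_right ht))).sInf_mem
    ⟨f 0, 0, ⟨le_rfl, h0⟩, rfl⟩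
  obtain ⟨s, hs, h⟩ := this
  exact ⟨s, hs.1, hs.2, h⟩

lemma rInf_anti {T s t : ℝ} {f : ℝ → ℝ} (hf : ContinuousOn f (Icc 0 T)) (h0 : 0 ≤ s)
    (hs : s ≤ t) (ht : t ≤ T) : rInf f t ≤ rInf f s :=
  le_rInf h0 fun u h1 h2 => rInf_le hf ht h1 (h2.trans hs)

lemma rInf_congr {f g : ℝ → ℝ} {t : ℝ} (h : ∀ s, 0 ≤ s → s ≤ t → f s = g s) :
    rInf f t = rInf g t := by
  unfold rInf
  congr 1
  exact image_congr fun s hs => h s hs.1 hs.2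

lemma rInf_cont {T : ℝ} (hT : 0 ≤ T) {f : ℝ → ℝ} (hf : ContinuousOn f (Icc 0 T)) :
    ContinuousOn (rInf f) (Icc 0 T) := by
  set g : ℝ → ℝ := IccExtend hT ((Icc 0 T).domRestrict f) with hg
  have hgc : Continuous g := hf.domRestrict.Icc_extend'
  have h1 : Continuous fun t : ℝ => sInf ((fun u => g (t * u)) '' Icc (0 : ℝ) 1) := by
    apply IsCompact.continuous_sInf isCompact_Icc
    show Continuous fun p : ℝ × ℝ => g (p.1 * p.2)
    fun_prop
  refine h1.continuousOn.congr fun t ht => ?_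
  show sInf _ = sInf _
  congr 1
  ext z
  constructor
  · rintro ⟨s, hs, rfl⟩
    have hs' : s ∈ Icc 0 T := ⟨hs.1, hs.2.trans ht.2⟩
    have hgs : g s = f s := by rw [hg, IccExtend_of_mem hT _ hs']; rfl
    rcases ht.1.eq_or_lt with h | h
    · refine ⟨0, by simp, ?_⟩
      have : s = 0 := le_antisymm (hs.2.trans h.ge) hs.1
      simp only [mul_zero]
      rw [← hgs, this]
    · refine ⟨s / t, ⟨div_nonneg hs.1 ht.1, div_le_one_of_le₀ hs.2 ht.1⟩, ?_⟩
      show g (t * (s / t)) = f s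
      rw [mul_div_cancel₀ _ h.ne', hgs]
  · rintro ⟨u, hu, rfl⟩
    have h1 : 0 ≤ t * u := mul_nonneg ht.1 hu.1
    have h2 : t * u ≤ t := mul_le_of_le_one_right ht.1 hu.2
    refine ⟨t * u, ⟨h1, h2⟩, ?_⟩
    show f (t * u) = g (t * u)
    rw [hg, IccExtend_of_mem hT _ ⟨h1, h2.trans ht.2⟩]; rfl

lemma rInf_hit {T r s : ℝ} {x : ℝ → ℝ} (hx : ContinuousOn x (Icc 0 T)) (hr : 0 ≤ r)
    (hrs : r ≤ s) (hs : s ≤ T) (h : rInf x s < rInf x r) :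
    ∃ u, r ≤ u ∧ u ≤ s ∧ x u = rInf x r ∧ rInf x u = rInf x r := by
  obtain ⟨v, hv0, hvs, hv⟩ := rInf_mem hx (hr.trans hrs) hs
  have hrv : r ≤ v := by
    by_contra hc
    push Not at hc
    have := rInf_le hx (hrs.trans hs) hv0 hc.le
    linarith
  have hxr := rInf_le hx (hrs.trans hs) hr le_rfl
  have hcv : ∀ w, w ≤ T → ContinuousOn x (Icc r w) := fun w hw => hx.mono (Icc_subset_Icc hr hw)
  obtain ⟨u0, hu0, hu0'⟩ := intermediate_value_Icc' hrv (hcv v (hvs.trans hs))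
    (show rInf x r ∈ Icc (x v) (x r) from ⟨by linarith, hxr⟩)
  have hK : IsCompact (Icc r v ∩ x ⁻¹' {rInf x r}) :=
    isCompact_Icc.of_isClosed_subset
      ((hcv v (hvs.trans hs)).preimage_isClosed_of_isClosed isClosed_Icc isClosed_singleton)
      inter_subset_left
  obtain ⟨u, ⟨hu, hux⟩, hl⟩ := hK.exists_isLeast ⟨u0, hu0, hu0'⟩
  have hux : x u = rInf x r := hux
  refine ⟨u, hu.1, hu.2.trans hvs, hux, ?_⟩
  have huT : u ≤ T := hu.2.trans (hvs.trans hs)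
  refine le_antisymm (rInf_anti hx hr hu.1 huT) (le_rInf (hr.trans hu.1) fun w hw0 hwu => ?_)
  rcases le_total w r with hwr | hwr
  · exact rInf_le hx (hrs.trans hs) hw0 hwr
  · by_contra hc
    push Not at hc
    obtain ⟨z, hz, hz'⟩ := intermediate_value_Icc' hwr (hcv w (hwu.trans huT))
      (show rInf x r ∈ Icc (x w) (x r) from ⟨hc.le, hxr⟩)
    have := hl ⟨⟨hz.1, hz.2.trans (hwu.trans hu.2)⟩, hz'⟩
    have hzw : w = u := le_antisymm hwu (this.trans hz.2)
    rw [hzw, hux] at hc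
    exact lt_irrefl _ hc

/-- The key Pitman-type identity. -/
lemma pitman_key {T t c : ℝ} {x ψ : ℝ → ℝ} (hc : 0 ≤ c) (hx : ContinuousOn x (Icc 0 T))
    (hψ : ContinuousOn ψ (Icc 0 T)) (ht0 : 0 ≤ t) (ht : t ≤ T) :
    rInf (fun s => c * (x s - 2 * rInf x s) + rInf (fun r => c * rInf x r + ψ r) s) t
      = rInf (fun s => c * x s + rInf ψ s) t - c * rInf x t := by
  have hT := ht0.trans ht
  have hm := rInf_cont hT hx
  have hφ : ContinuousOn (fun r => c * rInf x r + ψ r) (Icc 0 T) := by fun_prop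
  have hφm := rInf_cont hT hφ
  have hψm := rInf_cont hT hψ
  have hA : ContinuousOn (fun s => c * (x s - 2 * rInf x s)
      + rInf (fun r => c * rInf x r + ψ r) s) (Icc 0 T) := by fun_prop
  have hB : ContinuousOn (fun s => c * x s + rInf ψ s) (Icc 0 T) := by fun_prop
  apply le_antisymm
  · obtain ⟨s, hs0, hst, hs⟩ := rInf_mem hB ht0 ht
    rw [← hs]
    obtain ⟨r, hr0, hrs, hr⟩ := rInf_mem hψ hs0 (hst.trans ht)
    have key : ∃ u, r ≤ u ∧ u ≤ t ∧ x u - 2 * rInf x u + rInf x r ≤ x s - rInf x t := by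
      have h1 := rInf_anti hx hr0 hrs (hst.trans ht)
      have h2 := rInf_anti hx hs0 hst ht
      rcases h1.eq_or_lt with h | h
      · exact ⟨s, hrs, hst, by linarith⟩
      · obtain ⟨u, h3, h4, h5, h6⟩ := rInf_hit hx hr0 hrs (hst.trans ht) h
        exact ⟨u, h3, h4.trans hst, by linarith [rInf_le hx ht hs0 hst]⟩
    obtain ⟨u, hru, hut, hu⟩ := key
    have h1 := rInf_le hA ht (hr0.trans hru) hut
    have h2 := rInf_le hφ (hut.trans ht) hr0 hru
    have h3 := mul_le_mul_of_nonneg_left hu hc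
    try simp only at h1 h2 ⊢
    nlinarith
  · obtain ⟨s, hs0, hst, hs⟩ := rInf_mem hA ht0 ht
    rw [← hs]
    obtain ⟨r, hr0, hrs, hr⟩ := rInf_mem hφ hs0 (hst.trans ht)
    have key : ∃ u, r ≤ u ∧ u ≤ t ∧ x u - rInf x t ≤ x s - 2 * rInf x s + rInf x r := by
      have h1 := rInf_anti hx hr0 hrs (hst.trans ht)
      have h2 := rInf_anti hx hs0 hst ht
      rcases h2.eq_or_lt with h | h
      · exact ⟨s, hrs, hst, by linarith⟩
      · obtain ⟨u, h3, h4, h5⟩ := rInf_mem hx ht0 ht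
        have hsu : s ≤ u := by
          by_contra hcon
          push Not at hcon
          have := rInf_le hx (hst.trans ht) h3 hcon.le
          linarith
        exact ⟨u, hrs.trans hsu, h4, by linarith [rInf_le hx (hst.trans ht) hs0 le_rfl]⟩
    obtain ⟨u, hru, hut, hu⟩ := key
    have h1 := rInf_le hB ht (hr0.trans hru) hut
    have h2 := rInf_le hψ (hut.trans ht) hr0 hru
    have h3 := mul_le_mul_of_nonneg_left hu hc
    try simp only at h1 h2 hr ⊢
    nlinarith

/-- Chain infima. -/
noncomputable def ch (U : ℕ → ℝ) : ℕ → ℕ → (ℝ → ℝ) → (ℝ → ℝ) → ℝ → ℝ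
  | 0, _, _, _ => fun _ => 0
  | k + 1, j, x, y => rInf (fun s => U j * x s + ch U k (j + 1) y x s)

lemma ch_cont {T : ℝ} (hT : 0 ≤ T) (U : ℕ → ℝ) (k : ℕ) : ∀ (j : ℕ) (x y : ℝ → ℝ),
    ContinuousOn x (Icc 0 T) → ContinuousOn y (Icc 0 T) → ContinuousOn (ch U k j x y) (Icc 0 T) := by
  induction k with
  | zero => intro j x y _ _; exact continuousOn_const
  | succ k ih =>
    intro j x y hx hy
    have := ih (j + 1) y x hy hx
    exact rInf_cont hT (by fun_prop)

lemma rInf_mul {T t c : ℝ} {x : ℝ → ℝ} (hc : 0 ≤ c) (hx : ContinuousOn x (Icc 0 T))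
    (ht0 : 0 ≤ t) (ht : t ≤ T) : rInf (fun s => c * x s) t = c * rInf x t := by
  have hcx : ContinuousOn (fun s => c * x s) (Icc 0 T) := by fun_prop
  apply le_antisymm
  · obtain ⟨s, h1, h2, h3⟩ := rInf_mem hx ht0 ht
    rw [← h3]
    exact rInf_le hcx ht h1 h2
  · exact le_rInf ht0 fun s h1 h2 => mul_le_mul_of_nonneg_left (rInf_le hx ht h1 h2) hc

lemma ch_X {T ρ : ℝ} (hT : 0 ≤ T) {U : ℕ → ℝ} (hU : ∀ i, U (i + 2) = 2 * ρ * U (i + 1) - U i)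
    {x y : ℝ → ℝ} (hx : ContinuousOn x (Icc 0 T)) (hy : ContinuousOn y (Icc 0 T)) (l : ℕ) :
    ∀ j, (∀ i ≤ j + 2 * l, 0 ≤ U i) → ∀ t, 0 ≤ t → t ≤ T →
      ch U (2 * l) j (fun s => x s - 2 * rInf x s) (fun s => y s + 2 * ρ * rInf x s) t
        = ch U (2 * l + 1) j x y t - U j * rInf x t := by
  induction l with
  | zero =>
    intro j hp t ht0 ht
    simp only [mul_zero, zero_add, ch, add_zero]
    rw [rInf_mul (hp j (by omega)) hx ht0 ht]; ring
  | succ l ih =>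
    intro j hp t ht0 ht
    have hm := rInf_cont hT hx
    have hΦ := ch_cont hT U (2 * l + 1) (j + 2) x y hx hy
    have hψ : ContinuousOn (fun r => U (j + 1) * y r + ch U (2 * l + 1) (j + 2) x y r)
      (Icc 0 T) := by fun_prop
    have := pitman_key (hp j (by omega)) hx hψ ht0 ht
    show rInf (fun s => U j * (x s - 2 * rInf x s) + rInf (fun r => U (j + 1) *
        (y r + 2 * ρ * rInf x r) + ch U (2 * l) (j + 2) (fun s => x s - 2 * rInf x s)
          (fun s => y s + 2 * ρ * rInf x s) r) s) t
      = rInf (fun s => U j * x s + rInf (fun r => U (j + 1) * y r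
          + ch U (2 * l + 1) (j + 2) x y r) s) t - U j * rInf x t
    rw [← this]
    refine rInf_congr fun s hs0 hst => ?_
    congr 1
    refine rInf_congr fun r hr0 hrs => ?_
    rw [ih (j + 2) (fun i hi => hp i (by omega)) r hr0 (by linarith), hU j]
    ring

lemma ch_Y {T ρ : ℝ} (hT : 0 ≤ T) {U : ℕ → ℝ} (hU : ∀ i, U (i + 2) = 2 * ρ * U (i + 1) - U i)
    (hU0 : U 0 = 0)
    {x y : ℝ → ℝ} (hx : ContinuousOn x (Icc 0 T)) (hy : ContinuousOn y (Icc 0 T)) (l : ℕ)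
    (hp : ∀ i ≤ 2 + 2 * l, 0 ≤ U i) (t : ℝ) (ht : t ≤ T) :
      ch U (2 * l + 1) 1 (fun s => y s + 2 * ρ * rInf x s) (fun s => x s - 2 * rInf x s) t
        = ch U (2 * l + 2) 1 y x t := by
  show rInf (fun s => U 1 * (y s + 2 * ρ * rInf x s) + ch U (2 * l) 2 _ _ s) t
    = rInf (fun s => U 1 * y s + ch U (2 * l + 1) 2 x y s) t
  refine rInf_congr fun s hs0 hst => ?_
  rw [ch_X hT hU hx hy l 2 hp s hs0 (hst.trans ht)]
  have := hU 0
  rw [hU0] at this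
  simp only [zero_add] at this
  rw [this]; ring

lemma ch_trunc {U : ℕ → ℝ} (k : ℕ) : ∀ (j : ℕ) (x y : ℝ → ℝ), U (j + k) = 0 →
    ch U (k + 1) j x y = ch U k j x y := by
  induction k with
  | zero =>
    intro j x y h
    funext t
    simp only [add_zero] at h
    simp only [ch, h, zero_mul, add_zero, rInf]
    rcases (Icc (0:ℝ) t).eq_empty_or_nonempty with h | h
    · simp [h]
    · simp [h.image_const]
  | succ k ih =>
    intro j x y h
    rw [ch, ih (j + 1) y x (by rw [← h]; congr 1; ring), ← ch]

lemma altComp_right {X : Type*} (n : ℕ) : ∀ (P Q : X → X),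
    altComp P Q (n + 1) = altComp P Q n ∘ (if Even n then P else Q) := by
  induction n with
  | zero => intro P Q; simp [altComp]
  | succ n ih =>
    intro P Q
    rw [altComp, ih Q P, altComp, Function.comp_assoc]
    by_cases h : Even n <;> simp [h, Nat.even_add_one]

lemma pitman_cont {V : Type*} [NormedAddCommGroup V] [NormedSpace ℝ V] [FiniteDimensional ℝ V]
    {T : ℝ} (hT : 0 ≤ T) (α : V) (αv : Module.Dual ℝ V) {π : ℝ → V}
    (h : ContinuousOn π (Icc 0 T)) : ContinuousOn (pitman α αv π) (Icc 0 T) := by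
  have h1 : ContinuousOn (fun s => αv (π s)) (Icc 0 T) :=
    αv.continuous_of_finiteDimensional.comp_continuousOn h
  have h2 := rInf_cont hT h1
  exact h.sub (h2.smul continuousOn_const)

lemma formula {V : Type*} [NormedAddCommGroup V] [NormedSpace ℝ V] [FiniteDimensional ℝ V]
    {T ρ : ℝ} (hT : 0 ≤ T) (α β : V) (αv βv : Module.Dual ℝ V)
    (hα : αv α = 2) (hβ : βv β = 2) (hαβ : αv β = -(2 * ρ)) (hβα : βv α = -(2 * ρ))
    {U : ℕ → ℝ} (hU : ∀ i, U (i + 2) = 2 * ρ * U (i + 1) - U i)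
    (hU0 : U 0 = 0) (hU1 : U 1 = 1) (n : ℕ) (hp : ∀ i ≤ n + 1, 0 ≤ U i) :
    ∀ π : ℝ → V, ContinuousOn π (Icc 0 T) → ∀ t, 0 ≤ t → t ≤ T →
      altComp (pitman α αv) (pitman β βv) (n + 1) π t
        = π t - ch U (n + 1) 1 (fun s => αv (π s)) (fun s => βv (π s)) t • α
          - ch U n 1 (fun s => βv (π s)) (fun s => αv (π s)) t • β := by
  induction n with
  | zero =>
    intro π hπ t ht0 ht
    simp [altComp, pitman, ch, rInf, hU1]
  | succ n ih =>
    intro π hπ t ht0 ht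
    have hx : ContinuousOn (fun s => αv (π s)) (Icc 0 T) :=
      αv.continuous_of_finiteDimensional.comp_continuousOn hπ
    have hy : ContinuousOn (fun s => βv (π s)) (Icc 0 T) :=
      βv.continuous_of_finiteDimensional.comp_continuousOn hπ
    have ih := ih (fun i hi => hp i (by omega))
    rw [altComp_right, Function.comp_apply]
    by_cases h : Even (n + 1)
    · rw [if_pos h, ih _ (pitman_cont hT α αv hπ) t ht0 ht]
      have e1 : (fun s => αv (pitman α αv π s))
          = fun s => αv (π s) - 2 * rInf (fun s => αv (π s)) s := by
        funext s
        simp only [pitman, map_sub, map_smul, hα, smul_eq_mul, rInf]; ring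
      have e2 : (fun s => βv (pitman α αv π s))
          = fun s => βv (π s) + 2 * ρ * rInf (fun s => αv (π s)) s := by
        funext s
        simp only [pitman, map_sub, map_smul, hβα, smul_eq_mul, rInf]; ring
      rw [e1, e2]
      obtain ⟨l, hl⟩ := h
      have hX := ch_X hT hU hx hy l 1 (fun i hi => hp i (by omega)) t ht0 ht
      rw [show 2 * l = n + 1 by omega] at hX
      obtain ⟨k, rfl⟩ : ∃ k, n = 2 * k + 1 := ⟨l - 1, by omega⟩
      have hY := ch_Y hT hU hU0 hx hy k (fun i hi => hp i (by omega)) t ht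
      rw [hX, hY, hU1]
      simp only [pitman]
      rw [show sInf ((fun s => αv (π s)) '' Icc 0 t) = rInf (fun s => αv (π s)) t from rfl]
      module
    · rw [if_neg h, ih _ (pitman_cont hT β βv hπ) t ht0 ht]
      have e1 : (fun s => βv (pitman β βv π s))
          = fun s => βv (π s) - 2 * rInf (fun s => βv (π s)) s := by
        funext s
        simp only [pitman, map_sub, map_smul, hβ, smul_eq_mul, rInf]; ring
      have e2 : (fun s => αv (pitman β βv π s))
          = fun s => αv (π s) + 2 * ρ * rInf (fun s => βv (π s)) s := by
        funext s
        simp only [pitman, map_sub, map_smul, hαβ, smul_eq_mul, rInf]; ring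
      rw [e1, e2]
      rw [Nat.not_even_iff_odd] at h
      obtain ⟨l, hl⟩ := h
      obtain rfl : n = 2 * l := by omega
      have hX := ch_X hT hU hy hx l 1 (fun i hi => hp i (by omega)) t ht0 ht
      have hY := ch_Y hT hU hU0 hy hx l (fun i hi => hp i (by omega)) t ht
      rw [hX, hY, hU1]
      simp only [pitman]
      rw [show sInf ((fun s => βv (π s)) '' Icc 0 t) = rInf (fun s => βv (π s)) t from rfl]
      module

lemma pitman_scale {V : Type*} [AddCommGroup V] [Module ℝ V] (α : V) (αv : Module.Dual ℝ V)
    {c : ℝ} (hc : 0 < c) : pitman (c • α) (c⁻¹ • αv) = pitman α αv := by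
  funext π t
  have : sInf ((fun s => (c⁻¹ • αv) (π s)) '' Icc 0 t)
      = c⁻¹ * sInf ((fun s => αv (π s)) '' Icc 0 t) := by
    rw [← smul_eq_mul, ← Real.sInf_smul_of_nonneg (inv_nonneg.2 hc.le), ← image_smul, image_image]
    rfl
  simp only [pitman]
  rw [this, smul_smul, mul_right_comm, inv_mul_cancel₀ hc.ne', one_mul]

/-- Braid relations for the Pitman transforms (Theorem 2.3 of Biane–Bougerol–O'Connell):
if `α∨(α) = β∨(β) = 2`, `α∨(β) < 0`, `β∨(α) < 0` and
`α∨(β)·β∨(α) = 4 cos²(π/n)` for some integer `n ≥ 2`, then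
`P_α P_β P_α ⋯ = P_β P_α P_β ⋯` (`n` alternating factors on each side). -/
theorem pitman_braid
    {V : Type*} [NormedAddCommGroup V] [NormedSpace ℝ V] [FiniteDimensional ℝ V]
    (T : ℝ) (hT : 0 < T) (α β : V) (αv βv : Module.Dual ℝ V)
    (hα : αv α = 2) (hβ : βv β = 2)
    (hαβ : αv β < 0) (hβα : βv α < 0)
    (n : ℕ) (hn : 2 ≤ n)
    (hcos : αv β * βv α = 4 * Real.cos (Real.pi / n) ^ 2)
    (π : ℝ → V) (hcont : ContinuousOn π (Set.Icc 0 T)) (h0 : π 0 = 0) :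
    ∀ t ∈ Set.Icc 0 T,
      altComp (pitman α αv) (pitman β βv) n π t
        = altComp (pitman β βv) (pitman α αv) n π t := by
  intro t ht
  obtain ⟨N, rfl⟩ : ∃ N, n = N + 1 := ⟨n - 1, by omega⟩
  have hTn : (0 : ℝ) ≤ T := hT.le
  set θ : ℝ := Real.pi / ((N + 1 : ℕ) : ℝ) with hθ
  have hn2 : (2 : ℝ) ≤ ((N + 1 : ℕ) : ℝ) := by exact_mod_cast hn
  have hθ0 : 0 < θ := div_pos Real.pi_pos (by linarith)
  have hnθ : ((N + 1 : ℕ) : ℝ) * θ = Real.pi := by rw [hθ]; field_simp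
  have hθ2 : θ ≤ Real.pi / 2 := by nlinarith
  have hsin : 0 < Real.sin θ := Real.sin_pos_of_pos_of_lt_pi hθ0 (by linarith [Real.pi_pos])
  have hcosθ : 0 ≤ Real.cos θ := Real.cos_nonneg_of_mem_Icc ⟨by linarith, hθ2⟩
  set U : ℕ → ℝ := fun i => Real.sin (i * θ) / Real.sin θ with hUdef
  have hU : ∀ i, U (i + 2) = 2 * Real.cos θ * U (i + 1) - U i := by
    intro i
    simp only [hUdef]
    have e1 : ((i + 2 : ℕ) : ℝ) * θ = ((i + 1 : ℕ) : ℝ) * θ + θ := by push_cast; ring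
    have e2 : (i : ℝ) * θ = ((i + 1 : ℕ) : ℝ) * θ - θ := by push_cast; ring
    rw [e1, e2, Real.sin_add, Real.sin_sub]
    field_simp
    ring
  have hU0 : U 0 = 0 := by simp [hUdef]
  have hU1 : U 1 = 1 := by simp [hUdef, hsin.ne']
  have hUn : U (1 + N) = 0 := by
    simp only [hUdef]
    rw [add_comm 1 N, hnθ, Real.sin_pi, zero_div]
  have hp : ∀ i ≤ N + 1, 0 ≤ U i := by
    intro i hi
    refine div_nonneg (Real.sin_nonneg_of_nonneg_of_le_pi (by positivity) ?_) hsin.le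
    rw [← hnθ]
    have : (i : ℝ) ≤ ((N + 1 : ℕ) : ℝ) := by exact_mod_cast hi
    gcongr
  -- normalisation
  set c : ℝ := Real.sqrt (αv β / βv α) with hc
  have hq : 0 < αv β / βv α := div_pos_of_neg_of_neg hαβ hβα
  have hc0 : 0 < c := Real.sqrt_pos.2 hq
  have hcc : c * c * βv α = αv β := by
    rw [hc, Real.mul_self_sqrt hq.le, div_mul_cancel₀ _ hβα.ne]
  have hba : c * βv α = -(2 * Real.cos θ) := by
    have h1 : (c * βv α) ^ 2 = (2 * Real.cos θ) ^ 2 := by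
      have : (c * βv α) ^ 2 = αv β * βv α := by rw [← hcc]; ring
      rw [this, hcos]; ring
    rcases sq_eq_sq_iff_eq_or_eq_neg.1 h1 with h | h
    · have := mul_neg_of_pos_of_neg hc0 hβα
      linarith
    · exact h
  have hab : c⁻¹ * αv β = -(2 * Real.cos θ) := by
    rw [← hba, ← hcc]; field_simp
  rw [← pitman_scale α αv hc0]
  have hα' : (c⁻¹ • αv) (c • α) = 2 := by
    simp only [LinearMap.smul_apply, map_smul, smul_eq_mul, hα]
    field_simp
  have hαβ' : (c⁻¹ • αv) β = -(2 * Real.cos θ) := by simpa using hab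
  have hβα' : βv (c • α) = -(2 * Real.cos θ) := by simpa using hba
  rw [formula hTn (c • α) β (c⁻¹ • αv) βv hα' hβ hαβ' hβα' hU hU0 hU1 N hp π hcont t ht.1 ht.2,
    formula hTn β (c • α) βv (c⁻¹ • αv) hβ hα' hβα' hαβ' hU hU0 hU1 N hp π hcont t ht.1 ht.2,
    ch_trunc N 1 _ _ hUn, ch_trunc N 1 _ _ hUn]
  module
end

section
/- Well-definedness of P_w: in the Coxeter setting below, let w ∈ W and let (s_1, …, s_l) and (s'_1, …, s'_l) be two reduced words for w, i.e. σ_{s_1} ⋯ σ_{s_l} = σ_{s'_1} ⋯ σ_{s'_l} = w with l = ℓ(w) the length of w. Then P_{α_{s_1}} ∘ ⋯ ∘ P_{α_{s_l}} = P_{α_{s'_1}} ∘ ⋯ ∘ P_{α_{s'_l}} as transformations of the set of continuous paths π : [0,T] → V with π(0) = 0. -/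
/-- The composite Pitman transform `P_{α_{s₁}} ∘ ⋯ ∘ P_{α_{s_l}}` along a word
`l = [s₁, …, s_l]` in the generators. -/
noncomputable def pitmanWord {V : Type*} [AddCommGroup V] [Module ℝ V] {B : Type*}
    (α : B → V) (αv : B → Module.Dual ℝ V) (l : List B) : (ℝ → V) → (ℝ → V) :=
  l.foldr (fun s f => pitman (α s) (αv s) ∘ f) id

/-- Running infimum. -/
noncomputable def rinf (f : ℝ → ℝ) (t : ℝ) : ℝ := sInf (f '' Set.Icc 0 t)

theorem rinf_neg (f : ℝ → ℝ) {t : ℝ} (ht : t < 0) : rinf f t = 0 := by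
  simp [rinf, Set.Icc_eq_empty (not_le.2 ht)]

theorem rinf_exists {f : ℝ → ℝ} (hf : ContinuousOn f (Set.Ici 0)) {t : ℝ} (ht : 0 ≤ t) :
    ∃ s ∈ Set.Icc 0 t, rinf f t = f s := by
  have h1 : IsCompact (f '' Set.Icc 0 t) :=
    isCompact_Icc.image_of_continuousOn (hf.mono Set.Icc_subset_Ici_self)
  obtain ⟨s, hs, h⟩ := h1.sInf_mem ⟨f 0, Set.mem_image_of_mem f ⟨le_rfl, ht⟩⟩
  exact ⟨s, hs, h.symm⟩

theorem rinf_le {f : ℝ → ℝ} (hf : ContinuousOn f (Set.Ici 0)) {s t : ℝ} (hs : 0 ≤ s)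
    (hst : s ≤ t) : rinf f t ≤ f s := by
  have h1 : IsCompact (f '' Set.Icc 0 t) :=
    isCompact_Icc.image_of_continuousOn (hf.mono Set.Icc_subset_Ici_self)
  exact csInf_le h1.bddBelow (Set.mem_image_of_mem f ⟨hs, hst⟩)

theorem le_rinf {f : ℝ → ℝ} {t c : ℝ} (ht : 0 ≤ t) (h : ∀ s, 0 ≤ s → s ≤ t → c ≤ f s) :
    c ≤ rinf f t := by
  apply le_csInf ((Set.nonempty_Icc.2 ht).image f)
  rintro _ ⟨s, hs, rfl⟩
  exact h s hs.1 hs.2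

theorem rinf_anti {f : ℝ → ℝ} (hf : ContinuousOn f (Set.Ici 0)) {s t : ℝ} (hs : 0 ≤ s)
    (hst : s ≤ t) : rinf f t ≤ rinf f s :=
  le_rinf hs fun _ h0 h1 => rinf_le hf h0 (h1.trans hst)

open Pointwise in
theorem rinf_mul {f : ℝ → ℝ} {c : ℝ} (hc : 0 ≤ c) (t : ℝ) :
    rinf (fun s => c * f s) t = c * rinf f t := by
  have : (fun s => c * f s) '' Set.Icc 0 t = c • (f '' Set.Icc 0 t) := by
    ext y; simp [Set.mem_smul_set]
  rw [rinf, rinf, this, Real.sInf_smul_of_nonneg hc, smul_eq_mul]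

theorem rinf_zero (t : ℝ) : rinf (fun _ => 0) t = 0 := by
  have := rinf_mul (f := fun _ => (0:ℝ)) (le_refl (0:ℝ)) t
  simpa using this

theorem rinf_cont {f : ℝ → ℝ} (hf : ContinuousOn f (Set.Ici 0)) :
    ContinuousOn (rinf f) (Set.Ici 0) := by
  have hg : Continuous (fun t => f (max t 0)) :=
    hf.comp_continuous (by fun_prop) (fun x => Set.mem_Ici.2 (le_max_right _ _))
  have hc : Continuous (fun t : ℝ => sInf ((fun r => f (max (r * t) 0)) '' Set.Icc (0:ℝ) 1)) :=
    IsCompact.continuous_sInf (f := fun t r => f (max (r * t) 0)) isCompact_Icc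
      (hg.comp (by fun_prop : Continuous fun p : ℝ × ℝ => p.2 * p.1))
  refine hc.continuousOn.congr ?_
  intro t ht
  have ht : (0:ℝ) ≤ t := ht
  unfold rinf
  congr 1
  ext y
  constructor
  · rintro ⟨s, hs, rfl⟩
    rcases ht.eq_or_lt with h | h
    · subst h
      exact ⟨0, by simp, by simp [le_antisymm hs.2 hs.1]⟩
    · refine ⟨s / t, ⟨div_nonneg hs.1 ht, (div_le_one h).2 hs.2⟩, ?_⟩
      simp only
      rw [div_mul_cancel₀ _ h.ne', max_eq_left hs.1]
  · rintro ⟨r, hr, rfl⟩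
    refine ⟨r * t, ⟨mul_nonneg hr.1 ht, mul_le_of_le_one_left ht hr.2⟩, ?_⟩
    simp only
    rw [max_eq_left (mul_nonneg hr.1 ht)]

/-- The key identity of Pitman type. -/
theorem rinf_key {Z X : ℝ → ℝ} (hZ : ContinuousOn Z (Set.Ici 0)) (hX : ContinuousOn X (Set.Ici 0))
    (t : ℝ) :
    rinf (fun s => Z s - 2 * rinf Z s + rinf (fun u => X u + rinf Z u) s) t
      = rinf (fun s => Z s + rinf X s) t - rinf Z t := by
  rcases lt_or_ge t 0 with ht | ht
  · simp [rinf_neg _ ht]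
  have hI := rinf_cont hZ
  have hXI : ContinuousOn (fun u => X u + rinf Z u) (Set.Ici 0) := hX.add hI
  have hL : ContinuousOn (fun s => Z s - 2 * rinf Z s + rinf (fun u => X u + rinf Z u) s)
      (Set.Ici 0) := (hZ.sub (continuousOn_const.mul hI)).add (rinf_cont hXI)
  have hR : ContinuousOn (fun s => Z s + rinf X s) (Set.Ici 0) := hZ.add (rinf_cont hX)
  apply le_antisymm
  · obtain ⟨s, ⟨hs0, hst⟩, hs⟩ := rinf_exists hR ht
    obtain ⟨u, ⟨hu0, hus⟩, hu⟩ := rinf_exists hX hs0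
    rw [hs, hu]
    have key : ∃ s', u ≤ s' ∧ s' ≤ t ∧ Z s' - 2 * rinf Z s' + rinf Z u ≤ Z s - rinf Z t := by
      have hut := hus.trans hst
      rcases (rinf_anti hZ hu0 hut).eq_or_lt with h | h
      · refine ⟨s, hus, hst, ?_⟩
        have h1 := rinf_anti hZ hs0 hst
        linarith
      · obtain ⟨r, ⟨hr0, hrt⟩, hr⟩ := rinf_exists hZ ht
        have hur : u ≤ r := by
          by_contra hlt
          have := rinf_le hZ hr0 (not_le.1 hlt).le
          linarith
        have hsub : ∀ b, Set.Icc u b ⊆ Set.Ici 0 := fun b y hy => hu0.trans hy.1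
        have hc : IsCompact (Set.Icc u t ∩ Z ⁻¹' {rinf Z u}) :=
            isCompact_Icc.of_isClosed_subset
              ((hZ.mono (hsub t)).preimage_isClosed_of_isClosed isClosed_Icc
                isClosed_singleton) Set.inter_subset_left
        have ivt : ∀ b, u ≤ b → Z b ≤ rinf Z u → ∃ y ∈ Set.Icc u b, Z y = rinf Z u := by
          intro b hb hzb
          have := intermediate_value_Icc' hb (hZ.mono (hsub b))
          exact this ⟨hzb, rinf_le hZ hu0 le_rfl⟩
        obtain ⟨y, hy, hyz⟩ := ivt r hur (by linarith)
        obtain ⟨s', ⟨⟨hs'1, hs'2⟩, hs'3⟩, hmin⟩ :=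
          hc.exists_isLeast ⟨y, ⟨hy.1, hy.2.trans hrt⟩, hyz⟩
        have hs'3 : Z s' = rinf Z u := hs'3
        refine ⟨s', hs'1, hs'2, ?_⟩
        have h1 : rinf Z u ≤ rinf Z s' := by
          apply le_rinf (hu0.trans hs'1)
          intro q hq0 hq
          rcases le_total q u with hqu | hqu
          · exact rinf_le hZ hq0 hqu
          · by_contra hlt
            push Not at hlt
            obtain ⟨y, hy, hyz⟩ := ivt q hqu hlt.le
            have := hmin ⟨⟨hy.1, hy.2.trans (hq.trans hs'2)⟩, hyz⟩
            have e : q = s' := le_antisymm hq (this.trans hy.2)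
            rw [e] at hlt
            linarith
        have h2 := rinf_le hZ hs0 hst
        linarith
    obtain ⟨s', hus', hs't, hk⟩ := key
    have h1 := rinf_le hL (hu0.trans hus') hs't
    have h2 := rinf_le hXI hu0 hus'
    linarith
  · obtain ⟨s, ⟨hs0, hst⟩, hs⟩ := rinf_exists hL ht
    obtain ⟨u, ⟨hu0, hus⟩, hu⟩ := rinf_exists hXI hs0
    rw [hs, hu]
    have hut := hus.trans hst
    rcases (rinf_anti hZ hu0 hut).eq_or_lt with h | h
    · have h1 := rinf_anti hZ hs0 hst
      have h2 := rinf_anti hZ hu0 hus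
      have h3 := rinf_le hR hs0 hst
      have h4 := rinf_le hX hu0 hus
      linarith
    · obtain ⟨r, ⟨hr0, hrt⟩, hr⟩ := rinf_exists hZ ht
      have hur : u ≤ r := by
        by_contra hlt
        have := rinf_le hZ hr0 (not_le.1 hlt).le
        linarith
      have h3 := rinf_le hR hr0 hrt
      have h4 := rinf_le hX hu0 hur
      have h1 := rinf_le hZ hs0 (le_refl s)
      have h2 := rinf_anti hZ hu0 hus
      linarith

/-- Chebyshev-type sequence. -/
noncomputable def chebU (x : ℝ) : ℕ → ℝ
  | 0 => 0
  | 1 => 1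
  | (k + 2) => x * chebU x (k + 1) - chebU x k

/-- Nested infimum functional. -/
noncomputable def nestK (x : ℝ) (Z : ℕ → ℝ → ℝ) : ℕ → ℕ → ℝ → ℝ
  | 0, _ => fun _ => 0
  | (d + 1), j => rinf (fun s => chebU x (j + 1) * Z j s + nestK x Z d (j + 1) s)

theorem nestK_succ (x : ℝ) (Z : ℕ → ℝ → ℝ) (d j : ℕ) : nestK x Z (d + 1) j =
    rinf (fun s => chebU x (j + 1) * Z j s + nestK x Z d (j + 1) s) := rfl

theorem nestK_cont {x : ℝ} {Z : ℕ → ℝ → ℝ} (hZ : ∀ i, ContinuousOn (Z i) (Set.Ici 0)) (d j : ℕ) :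
    ContinuousOn (nestK x Z d j) (Set.Ici 0) := by
  induction d generalizing j with
  | zero => exact continuousOn_const
  | succ d ih => exact rinf_cont ((continuousOn_const.mul (hZ j)).add (ih (j + 1)))

theorem nestK_step {x : ℝ} {Z : ℕ → ℝ → ℝ} {n : ℕ} (hZ : ∀ i, ContinuousOn (Z i) (Set.Ici 0))
    (hper : ∀ i, Z (i + 2) = Z i) (hU : ∀ i ≤ n, 0 ≤ chebU x (i + 1))
    (Z' : ℕ → ℝ → ℝ)
    (hZ' : ∀ i s, i ≤ n → Z' i s = Z i s + (if Even (n - i) then -2 else x) * rinf (Z n) s)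
    (e : ℕ) :
    (∀ j, j + 2 * e = n → nestK x Z' (2 * e) j =
      fun t => nestK x Z (2 * e + 1) j t - chebU x (j + 1) * rinf (Z n) t) ∧
    (∀ j, j + 2 * e + 1 = n → nestK x Z' (2 * e + 1) j =
      rinf (fun s => chebU x (j + 1) * Z j s + nestK x Z (2 * e + 1) (j + 1) s
        + chebU x j * rinf (Z n) s)) := by
  have hperm : ∀ e j, Z (j + 2 * e) = Z j := by
    intro e
    induction e with
    | zero => intro j; rfl
    | succ e ih => intro j; rw [show j + 2 * (e + 1) = (j + 2 * e) + 2 by ring, hper, ih]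
  have odd_of_even : ∀ e, (∀ j, j + 2 * e = n → nestK x Z' (2 * e) j =
      fun t => nestK x Z (2 * e + 1) j t - chebU x (j + 1) * rinf (Z n) t) →
      (∀ j, j + 2 * e + 1 = n → nestK x Z' (2 * e + 1) j =
      rinf (fun s => chebU x (j + 1) * Z j s + nestK x Z (2 * e + 1) (j + 1) s
        + chebU x j * rinf (Z n) s)) := by
    intro e h j hj
    rw [nestK, h (j + 1) (by omega)]
    congr 1
    funext s
    rw [hZ' j s (by omega), if_neg (by rw [show n - j = 2 * e + 1 by omega]; simp)]
    rw [chebU]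
    ring
  induction e with
  | zero =>
    have h0 : ∀ j, j + 2 * 0 = n → nestK x Z' (2 * 0) j =
      fun t => nestK x Z (2 * 0 + 1) j t - chebU x (j + 1) * rinf (Z n) t := by
      intro j hj
      obtain rfl : j = n := by omega
      funext t
      simp only [nestK, mul_zero, add_zero]
      rw [rinf_mul (hU j le_rfl)]
      ring
    exact ⟨h0, odd_of_even 0 h0⟩
  | succ e ih =>
    have h0 : ∀ j, j + 2 * (e + 1) = n → nestK x Z' (2 * (e + 1)) j =
      fun t => nestK x Z (2 * (e + 1) + 1) j t - chebU x (j + 1) * rinf (Z n) t := by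
      intro j hj
      have hc := hU j (by omega)
      have hZn : Z n = Z j := by rw [← hj, hperm]
      rw [show 2 * (e + 1) = (2 * e + 1) + 1 by ring, nestK, ih.2 (j + 1) (by omega)]
      funext t
      have hk := rinf_key (Z := fun s => chebU x (j + 1) * Z j s)
        (X := fun s => chebU x (j + 1 + 1) * Z (j + 1) s + nestK x Z (2 * e + 1) (j + 1 + 1) s)
        (continuousOn_const.mul (hZ j))
        ((continuousOn_const.mul (hZ (j + 1))).add (nestK_cont hZ _ _)) t
      simp only [rinf_mul hc] at hk
      rw [nestK_succ x Z (2 * e + 1 + 1) j, nestK_succ x Z (2 * e + 1) (j + 1), hZn]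
      convert hk using 3 with s
      rw [hZ' j s (by omega), if_pos (by rw [show n - j = 2 * (e + 1) by omega]; simp), hZn]
      ring
    exact ⟨h0, odd_of_even (e + 1) h0⟩

theorem nestK_last {x : ℝ} {Z : ℕ → ℝ → ℝ} (d j : ℕ) (h : chebU x (j + d + 1) = 0) :
    nestK x Z (d + 1) j = nestK x Z d j := by
  induction d generalizing j with
  | zero =>
    funext t
    simp only [add_zero] at h
    simp [nestK, h, rinf_zero]
  | succ d ih =>
    rw [nestK, ih (j + 1) (by rw [← h]; congr 1; ring)]
    rfl

/-- Alternating sequence. -/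
def altSeq {B : Type*} (a b : B) (n : ℕ) : B := if Even n then a else b

theorem altSeq_succ {B : Type*} (a b : B) (n : ℕ) : altSeq a b (n + 1) = altSeq b a n := by
  by_cases h : Even n <;> simp [altSeq, h, Nat.even_add_one]

/-- Alternating word starting with `a`. -/
def altW {B : Type*} (a b : B) (n : ℕ) : List B := (List.range n).map (altSeq a b)

theorem altW_succ {B : Type*} (a b : B) (n : ℕ) : altW a b (n + 1) = altW a b n ++ [altSeq a b n] := by
  simp [altW, List.range_succ]

theorem altW_succ' {B : Type*} (a b : B) (n : ℕ) : altW a b (n + 1) = a :: altW b a n := by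
  simp only [altW, List.range_succ_eq_map, List.map_cons, List.map_map]
  congr 1
  apply List.map_congr_left
  intro k _
  exact altSeq_succ a b k

section pit
variable {V : Type*} [NormedAddCommGroup V] [NormedSpace ℝ V] [FiniteDimensional ℝ V]
  {B : Type*} (α : B → V) (αv : B → Module.Dual ℝ V)

theorem pitmanWord_append (l l' : List B) (π : ℝ → V) :
    pitmanWord α αv (l ++ l') π = pitmanWord α αv l (pitmanWord α αv l' π) := by
  induction l with
  | nil => rfl
  | cons a l ih =>
    change pitman (α a) (αv a) (pitmanWord α αv (l ++ l') π) = _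
    rw [ih]; rfl

theorem dual_cont (f : Module.Dual ℝ V) {π : ℝ → V} (h : ContinuousOn π (Set.Ici 0)) :
    ContinuousOn (fun s => f (π s)) (Set.Ici 0) :=
  (LinearMap.continuous_of_finiteDimensional f).comp_continuousOn h

theorem pitman_cont_s7 (a : V) (f : Module.Dual ℝ V) {π : ℝ → V} (h : ContinuousOn π (Set.Ici 0)) :
    ContinuousOn (pitman a f π) (Set.Ici 0) :=
  h.sub ((rinf_cont (dual_cont f h)).smul continuousOn_const)

theorem pitmanWord_cont (l : List B) {π : ℝ → V} (h : ContinuousOn π (Set.Ici 0)) :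
    ContinuousOn (pitmanWord α αv l π) (Set.Ici 0) := by
  induction l with
  | nil => exact h
  | cons a l ih => exact pitman_cont_s7 (α a) (αv a) ih

theorem pitmanWord_alt {x : ℝ} (a b : B) (ha : αv a (α a) = 2) (hb : αv b (α b) = 2)
    (hab : αv a (α b) = -x) (hba : αv b (α a) = -x) (n : ℕ)
    (hU : ∀ i < n, 0 ≤ chebU x (i + 1)) {π : ℝ → V} (h : ContinuousOn π (Set.Ici 0)) :
    pitmanWord α αv (altW a b n) π = fun t => π t
      - nestK x (fun i s => αv (altSeq a b i) (π s)) n 0 t • α a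
      - nestK x (fun i s => αv (altSeq b a i) (π s)) (n - 1) 0 t • α b := by
  have val : ∀ (a b : B) (ha : αv a (α a) = 2) (hb : αv b (α b) = 2)
    (hab : αv a (α b) = -x) (hba : αv b (α a) = -x) (n i : ℕ), i ≤ n →
    αv (altSeq a b i) (α (altSeq a b n)) = - (if Even (n - i) then -2 else x) := by
    intro a b ha hb hab hba n i hi
    by_cases h1 : Even i <;> by_cases h2 : Even n <;>
      simp [altSeq, h1, h2, Nat.even_sub hi, ha, hb, hab, hba]
  induction n generalizing π with
  | zero => funext t; simp [altW, pitmanWord, nestK]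
  | succ n ih =>
    rw [altW_succ, pitmanWord_append]
    set c := altSeq a b n with hc
    have hcb : ∀ m, n = m + 1 → c = altSeq b a m := by
      intro m hm; rw [hc, hm, altSeq_succ]
    change pitmanWord α αv (altW a b n) (pitman (α c) (αv c) π) = _
    rw [ih (fun i hi => hU i (by omega)) (pitman_cont_s7 _ _ h)]
    have stepA := fun e => nestK_step (x := x) (Z := fun i s => αv (altSeq a b i) (π s)) (n := n)
      (fun i => dual_cont _ h) (fun i => by simp only [altSeq_succ])
      (fun i hi => hU i (by omega))
      (fun i s => αv (altSeq a b i) (pitman (α c) (αv c) π s))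
      (by
        intro i s hi
        change αv (altSeq a b i) (π s - rinf (fun u => αv c (π u)) s • α c) = _
        rw [map_sub, map_smul, hc, val a b ha hb hab hba n i hi, smul_eq_mul]
        ring) e
    have stepB := fun m (hm : n = m + 1) e => nestK_step (x := x)
      (Z := fun i s => αv (altSeq b a i) (π s)) (n := m)
      (fun i => dual_cont _ h) (fun i => by simp only [altSeq_succ])
      (fun i hi => hU i (by omega))
      (fun i s => αv (altSeq b a i) (pitman (α c) (αv c) π s))
      (by
        intro i s hi
        change αv (altSeq b a i) (π s - rinf (fun u => αv c (π u)) s • α c) = _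
        rw [map_sub, map_smul, hcb m hm, val b a hb ha hba hab m i hi, smul_eq_mul]
        ring) e
    funext t
    change π t - rinf (fun u => αv c (π u)) t • α c - _ - _ = _
    rcases Nat.even_or_odd' n with ⟨e, he | he⟩
    · have h1 := (stepA e).1 0 (by omega)
      have hca : c = a := by rw [hc]; simp [altSeq, he]
      rw [← he] at h1
      rw [h1]
      have h2 : nestK x (fun i s => αv (altSeq b a i) (pitman (α c) (αv c) π s)) (n - 1) 0
        = nestK x (fun i s => αv (altSeq b a i) (π s)) n 0 := by
        rcases e with _ | e
        · rw [he]; rfl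
        · have h3 := (stepB (n - 1) (by omega) e).2 0 (by omega)
          rw [show n - 1 = 2 * e + 1 by omega] at h3 ⊢
          rw [h3, he, show 2 * (e + 1) = (2 * e + 1) + 1 by ring]
          rw [nestK_succ x _ (2 * e + 1) 0]
          simp [chebU]
      rw [h2, ← hc, hca]
      simp only [chebU, zero_add, Nat.add_sub_cancel]
      module
    · have h1 := (stepA e).2 0 (by omega)
      have hca : c = b := by rw [hc]; simp [altSeq, he]
      rw [← he] at h1
      rw [h1]
      have h2 := (stepB (n - 1) (by omega) e).1 0 (by omega)
      rw [show 2 * e = n - 1 by omega, show n - 1 + 1 = n by omega] at h2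
      rw [h2, ← hcb (n - 1) (by omega), hca]
      have h3 : rinf (fun s => chebU x (0 + 1) * αv (altSeq a b 0) (π s)
          + nestK x (fun i s => αv (altSeq a b i) (π s)) n (0 + 1) s
          + chebU x 0 * rinf (fun s => αv (altSeq a b n) (π s)) s) =
          nestK x (fun i s => αv (altSeq a b i) (π s)) (n + 1) 0 := by
        rw [nestK]
        simp [chebU]
      rw [h3]
      simp only [chebU, zero_add, Nat.add_sub_cancel]
      module

theorem pitmanWord_braid {x : ℝ} (a b : B) (ha : αv a (α a) = 2) (hb : αv b (α b) = 2)
    (hab : αv a (α b) = -x) (hba : αv b (α a) = -x) (n : ℕ)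
    (hU : ∀ i < n, 0 ≤ chebU x (i + 1)) (hn : 0 < n) (hU0 : chebU x n = 0)
    {π : ℝ → V} (h : ContinuousOn π (Set.Ici 0)) :
    pitmanWord α αv (altW a b n) π = pitmanWord α αv (altW b a n) π := by
  rw [pitmanWord_alt α αv a b ha hb hab hba n hU h, pitmanWord_alt α αv b a hb ha hba hab n hU h]
  obtain ⟨m, rfl⟩ : ∃ m, n = m + 1 := ⟨n - 1, by omega⟩
  rw [nestK_last m 0 (by rw [← hU0]; congr 1; ring), nestK_last m 0 (by rw [← hU0]; congr 1; ring)]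
  funext t
  simp only [Nat.add_sub_cancel]
  module

end pit
section lin
variable {V : Type*} [AddCommGroup V] [Module ℝ V] {B : Type*}
  (α : B → V) (αv : B → Module.Dual ℝ V)

/-- Product of reflections along a word. -/
noncomputable def reflWord (l : List B) (v : V) : V :=
  l.foldr (fun s u => u - αv s u • α s) v

theorem reflWord_alt {x : ℝ} (a b : B) (ha : αv a (α a) = 2) (hb : αv b (α b) = 2)
    (hab : αv a (α b) = -x) (hba : αv b (α a) = -x) (n : ℕ) (v : V) :
    reflWord α αv (altW a b n) v = v
      - (∑ i ∈ Finset.range n, chebU x (i + 1) * αv (altSeq a b i) v) • α a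
      - (∑ i ∈ Finset.range (n - 1), chebU x (i + 1) * αv (altSeq b a i) v) • α b := by
  induction n generalizing a b with
  | zero => simp [altW, reflWord]
  | succ n ih =>
    rw [altW_succ']
    change reflWord α αv (altW b a n) v - αv a (reflWord α αv (altW b a n) v) • α a = _
    rw [ih b a hb ha hba hab]
    set P := ∑ i ∈ Finset.range n, chebU x (i + 1) * αv (altSeq b a i) v with hP
    set Q := ∑ i ∈ Finset.range (n - 1), chebU x (i + 1) * αv (altSeq a b i) v with hQ
    have key : ∑ i ∈ Finset.range (n + 1), chebU x (i + 1) * αv (altSeq a b i) v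
        = αv a v + x * P - Q := by
      rw [Finset.sum_range_succ', hP, hQ]
      rcases n with _ | n
      · simp [chebU, altSeq]
      · simp only [altSeq_succ, chebU, Nat.add_sub_cancel]
        simp only [sub_mul, Finset.sum_sub_distrib, Finset.mul_sum, mul_assoc]
        rw [Finset.sum_range_succ' (fun i => chebU x i * αv (altSeq b a i) v)]
        have h0 : altSeq a b 0 = a := by simp [altSeq]
        simp only [altSeq_succ, chebU, zero_mul, h0]
        ring
    rw [key]
    simp only [map_sub, map_smul, ha, hab, smul_eq_mul, Nat.add_sub_cancel]
    module

end lin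

theorem chebU_sin (θ : ℝ) (k : ℕ) :
    Real.sin θ * chebU (2 * Real.cos θ) k = Real.sin (k * θ) := by
  induction k using Nat.twoStepInduction with
  | zero => simp [chebU]
  | one => simp [chebU]
  | more k h1 h2 =>
    have e1 : ((k + 2 : ℕ) : ℝ) * θ = ((k + 1 : ℕ) : ℝ) * θ + θ := by push_cast; ring
    have e2 : (k : ℝ) * θ = ((k + 1 : ℕ) : ℝ) * θ - θ := by push_cast; ring
    rw [e2, Real.sin_sub] at h1
    rw [e1, Real.sin_add, chebU, mul_sub, h1]
    linear_combination (2 * Real.cos θ) * h2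

theorem chebU_two (k : ℕ) : chebU 2 k = k := by
  induction k using Nat.twoStepInduction with
  | zero => simp [chebU]
  | one => simp [chebU]
  | more k h1 h2 => rw [chebU, h1, h2]; push_cast; ring

theorem sin_pi_div_pos {m : ℕ} (hm : 2 ≤ m) : 0 < Real.sin (Real.pi / m) := by
  have hm' : (2:ℝ) ≤ m := by exact_mod_cast hm
  apply Real.sin_pos_of_pos_of_lt_pi
  · positivity
  · rw [div_lt_iff₀ (by linarith)]
    nlinarith [Real.pi_pos]

theorem chebU_pos {m k : ℕ} (hm : 2 ≤ m) (h0 : 0 < k) (hk : k < m) :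
    0 < chebU (2 * Real.cos (Real.pi / m)) k := by
  have h := chebU_sin (Real.pi / m) k
  have hs := sin_pi_div_pos hm
  have hm' : (0:ℝ) < m := by exact_mod_cast (by omega : 0 < m)
  have hk' : (k:ℝ) < m := by exact_mod_cast hk
  have hk0 : (0:ℝ) < k := by exact_mod_cast h0
  have : 0 < Real.sin (k * (Real.pi / m)) := by
    apply Real.sin_pos_of_pos_of_lt_pi
    · have := Real.pi_pos; positivity
    · rw [← mul_div_assoc, div_lt_iff₀ hm']
      nlinarith [Real.pi_pos]
  rw [← h] at this
  exact (mul_pos_iff_of_pos_left hs).1 this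

theorem chebU_eq_zero {m : ℕ} (hm : 2 ≤ m) : chebU (2 * Real.cos (Real.pi / m)) m = 0 := by
  have h := chebU_sin (Real.pi / m) m
  have hs := sin_pi_div_pos hm
  have hm' : (m:ℝ) ≠ 0 := by exact_mod_cast (by omega : m ≠ 0)
  rw [mul_div_cancel₀ _ hm', Real.sin_pi] at h
  exact (mul_eq_zero.1 h).resolve_left hs.ne'

theorem chebU_refl {m i : ℕ} (hm : 2 ≤ m) (hi : i ≤ 2 * m) :
    chebU (2 * Real.cos (Real.pi / m)) (2 * m - i) = - chebU (2 * Real.cos (Real.pi / m)) i := by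
  have h := chebU_sin (Real.pi / m) i
  have h' := chebU_sin (Real.pi / m) (2 * m - i)
  have hs := sin_pi_div_pos hm
  have hm' : (m:ℝ) ≠ 0 := by exact_mod_cast (by omega : m ≠ 0)
  have e : ((2 * m - i : ℕ) : ℝ) * (Real.pi / m) = 2 * Real.pi - i * (Real.pi / m) := by
    rw [Nat.cast_sub hi]; push_cast; field_simp
  rw [e, Real.sin_two_pi_sub, ← h] at h'
  apply mul_left_cancel₀ hs.ne'
  linarith

theorem altSeq_add_even {B : Type*} (a b : B) (n m : ℕ) (h : Even (n + m)) :
    altSeq a b n = altSeq a b m := by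
  rw [Nat.even_add] at h
  simp [altSeq, h]

theorem sum_alt_zero {m : ℕ} (hm : 2 ≤ m) {B : Type*} (a b : B) (f : B → ℝ) :
    ∑ i ∈ Finset.range (2 * m - 1), chebU (2 * Real.cos (Real.pi / m)) (i + 1) * f (altSeq a b i)
      = 0 := by
  have h := Finset.sum_range_reflect
    (fun i => chebU (2 * Real.cos (Real.pi / m)) (i + 1) * f (altSeq a b i)) (2 * m - 1)
  have h2 : ∑ j ∈ Finset.range (2 * m - 1), chebU (2 * Real.cos (Real.pi / m)) (2 * m - 1 - 1 - j + 1)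
      * f (altSeq a b (2 * m - 1 - 1 - j)) = ∑ j ∈ Finset.range (2 * m - 1),
      - (chebU (2 * Real.cos (Real.pi / m)) (j + 1) * f (altSeq a b j)) := by
    apply Finset.sum_congr rfl
    intro j hj
    rw [Finset.mem_range] at hj
    rw [show 2 * m - 1 - 1 - j + 1 = 2 * m - (j + 1) by omega, chebU_refl hm (by omega),
      altSeq_add_even a b (2 * m - 1 - 1 - j) j ⟨m - 1, by omega⟩]
    ring
  rw [h2, Finset.sum_neg_distrib] at h
  linarith

section cox
variable {B : Type*} {W : Type*} [Group W] {M : CoxeterMatrix B} (cs : CoxeterSystem M W)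

theorem geom_rep [Fintype B] (a b : B) (hab : a ≠ b) (n : ℕ) (hn : 0 < n)
    (hM : M a b = 0 ∨ n < M a b) : cs.wordProd (altW a b n) ≠ cs.wordProd (altW b a n) := by
  classical
  let α : B → (B → ℝ) := fun i => Pi.single i 1
  let αv : B → Module.Dual ℝ (B → ℝ) := fun i =>
    ∑ j, (-2 * Real.cos (Real.pi / M i j)) • LinearMap.proj j
  have hv : ∀ i j, αv i (α j) = -(2 * Real.cos (Real.pi / M i j)) := by
    intro i j
    simp [αv, α, Pi.single_apply]
  have hd : ∀ i, αv i (α i) = 2 := by intro i; rw [hv]; simp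
  let f : B → Function.End (B → ℝ) := fun i v => v - αv i v • α i
  have hf : ∀ l : List B, (l.map f).prod = reflWord α αv l := by
    intro l
    induction l with
    | nil => rfl
    | cons i l ih => rw [List.map_cons, List.prod_cons, ih]; rfl
  have hpow : ∀ i j k, (f i * f j) ^ k = reflWord α αv (altW i j (2 * k)) := by
    intro i j k
    rw [← hf]
    induction k with
    | zero => simp [altW]
    | succ k ih =>
      rw [show 2 * (k + 1) = (2 * k + 1) + 1 by ring, altW_succ', altW_succ', pow_succ', ih]
      simp [mul_assoc]
  have hlift : CoxeterMatrix.IsLiftable M f := by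
    intro i j
    by_cases hij : i = j
    · subst hij
      rw [M.diagonal, pow_one]
      funext v
      change (v - αv i v • α i) - αv i (v - αv i v • α i) • α i = v
      simp only [map_sub, map_smul, hd, smul_eq_mul]
      module
    · rcases Nat.eq_zero_or_pos (M i j) with h0 | h0
      · rw [h0, pow_zero]
      have h1 := M.off_diagonal i j hij
      have hm : 2 ≤ M i j := by omega
      rw [hpow]
      funext v
      rw [reflWord_alt α αv i j (hd i) (hd j) (hv i j) (by rw [hv, M.symmetric])]
      have e : 2 * M i j = (2 * M i j - 1) + 1 := by omega
      have s1 := sum_alt_zero hm i j (fun k => αv k v)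
      have s2 := sum_alt_zero hm j i (fun k => αv k v)
      have s3 : chebU (2 * Real.cos (Real.pi / M i j)) (2 * M i j) = 0 := by
        have := chebU_refl (m := M i j) hm (i := 0) (by omega)
        simpa [chebU] using this
      rw [s2]
      have s4 : ∑ k ∈ Finset.range (2 * M i j), chebU (2 * Real.cos (Real.pi / M i j)) (k + 1)
          * αv (altSeq i j k) v = 0 := by
        rw [e, Finset.sum_range_succ, s1, ← e, s3]; simp
      rw [s4]
      simp
      rfl
  intro heq
  have hφ : ∀ l, cs.lift ⟨f, hlift⟩ (cs.wordProd l) = reflWord α αv l := by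
    intro l
    rw [← hf, CoxeterSystem.wordProd, map_list_prod, List.map_map]
    congr 2
    funext i
    exact cs.lift_apply_simple hlift i
  have h1 := congrArg (cs.lift ⟨f, hlift⟩) heq
  rw [hφ, hφ] at h1
  obtain ⟨k, rfl⟩ : ∃ k, n = k + 1 := ⟨n - 1, by omega⟩
  have h2 := congrFun (congrFun h1 (α (altSeq a b k))) a
  have hba : αv b (α a) = -(2 * Real.cos (Real.pi / M a b)) := by rw [hv, M.symmetric]
  rw [reflWord_alt α αv a b (hd a) (hd b) (hv a b) hba,
    reflWord_alt α αv b a (hd b) (hd a) hba (hv a b), Nat.add_sub_cancel, Finset.sum_range_succ] at h2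
  have h3 : α a a = 1 := by simp [α]
  have h4 : α b a = 0 := by simp [α, hab]
  simp only [Pi.sub_apply, Pi.smul_apply, h3, h4, hd, smul_eq_mul] at h2
  have h5 : chebU (2 * Real.cos (Real.pi / M a b)) (k + 1) = 0 := by linarith
  rcases hM with h0 | h0
  · rw [h0] at h5
    simp only [Nat.cast_zero, div_zero, Real.cos_zero, mul_one] at h5
    rw [chebU_two] at h5
    norm_cast at h5
  · exact (chebU_pos (m := M a b) (by omega) hn h0).ne' h5

theorem ris_parity [DecidableEq W] (l l' : List B) (h : cs.wordProd l = cs.wordProd l') (t : W) :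
    (List.count t (cs.rightInvSeq l) : ZMod 2) = List.count t (cs.rightInvSeq l') := by
  let f : B → Function.End (W × ZMod 2) := fun i p =>
    (cs.simple i * p.1 * cs.simple i, p.2 + if p.1 = cs.simple i then 1 else 0)
  have hf : ∀ l : List B, (l.map f).prod = fun p : W × ZMod 2 =>
      (cs.wordProd l * p.1 * (cs.wordProd l)⁻¹, p.2 + List.count p.1 (cs.rightInvSeq l)) := by
    intro l
    induction l with
    | nil => funext p; simp; rfl
    | cons i l ih =>
      rw [List.map_cons, List.prod_cons, ih]
      funext p
      change (_, _) = _
      ext1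
      · simp [CoxeterSystem.wordProd_cons, mul_assoc]
      · simp only [CoxeterSystem.rightInvSeq, List.count_cons]
        have : (cs.wordProd l * p.1 * (cs.wordProd l)⁻¹ = cs.simple i) ↔
            ((cs.wordProd l)⁻¹ * cs.simple i * cs.wordProd l == p.1) = true := by
          rw [beq_iff_eq]
          constructor
          · intro h; rw [← h]; group
          · intro h; rw [← h]; group
        simp only [this]
        push_cast
        ring
  have hpow : ∀ i j k, (f i * f j) ^ k =
      ((CoxeterSystem.alternatingWord i j (2 * k)).map f).prod := by
    intro i j k
    induction k with
    | zero => simp [CoxeterSystem.alternatingWord]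
    | succ k ih =>
      rw [show 2 * (k + 1) = (2 * k + 1) + 1 by ring, CoxeterSystem.alternatingWord_succ,
        CoxeterSystem.alternatingWord_succ, pow_succ, ih]
      simp [mul_assoc]
  have hlift : CoxeterMatrix.IsLiftable M f := by
    intro i j
    rw [hpow, hf]
    have h1 : cs.wordProd (CoxeterSystem.alternatingWord i j (2 * M i j)) = 1 := by
      rw [cs.prod_alternatingWord_eq_mul_pow]; simp
    have h2 : ∀ t, (List.count t (cs.rightInvSeq
        (CoxeterSystem.alternatingWord i j (2 * M i j))) : ZMod 2) = 0 := by
      intro t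
      set ω := CoxeterSystem.alternatingWord i j (2 * M i j) with hω
      have hlen : (cs.leftInvSeq ω).length = 2 * M i j := by simp [hω]
      have h3 : cs.leftInvSeq ω = (cs.leftInvSeq ω).take (M i j) ++ (cs.leftInvSeq ω).take (M i j) := by
        apply List.ext_getElem
        · simp [hω]; omega
        · intro k hk1 hk2
          rw [List.getElem_append]
          split_ifs with hlt
          · rw [List.getElem_take]
          · simp only [List.getElem_take, List.length_take]
            rw [hlen] at hk1
            have hk3 : M i j ≤ k := by
              simp [hω] at hlt; omega
            simp only [hω]
            rw [cs.getElem_leftInvSeq_alternatingWord i j _ _ hk1,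
              cs.getElem_leftInvSeq_alternatingWord i j _ _ (by simp; omega)]
            rw [cs.prod_alternatingWord_eq_mul_pow, cs.prod_alternatingWord_eq_mul_pow]
            simp only [CoxeterSystem.length_leftInvSeq, CoxeterSystem.length_alternatingWord]
            rw [min_eq_left (by omega)]
            have e1 : (2 * k + 1) / 2 = M i j + (k - M i j) := by omega
            have e2 : (2 * (k - M i j) + 1) / 2 = (k - M i j) := by omega
            have o1 : ¬ Even (2 * k + 1) := by simp
            have o2 : ¬ Even (2 * (k - M i j) + 1) := by simp
            rw [e1, e2, if_neg o1, if_neg o2, pow_add, cs.simple_mul_simple_pow', one_mul]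
      have h4 : (List.count t (cs.leftInvSeq ω) : ZMod 2) = 0 := by
        rw [h3, List.count_append]
        push_cast
        exact CharTwo.add_self_eq_zero _
      have h5 : cs.rightInvSeq ω = cs.leftInvSeq ω := by
        apply List.ext_getElem
        · simp
        · intro k hk1 hk2
          have e1 := cs.wordProd_mul_getD_rightInvSeq ω k
          have e2 := cs.getD_leftInvSeq_mul_wordProd ω k
          rw [h1, one_mul, List.getD_eq_getElem _ _ hk1] at e1
          rw [h1, mul_one, List.getD_eq_getElem _ _ hk2] at e2
          rw [e1, e2]
      rw [h5, h4]
    funext p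
    simp [h1, h2]
    rfl
  have hφ : ∀ l, cs.lift ⟨f, hlift⟩ (cs.wordProd l) = (l.map f).prod := by
    intro l
    rw [CoxeterSystem.wordProd, map_list_prod, List.map_map]
    congr 2
    funext i
    exact cs.lift_apply_simple hlift i
  have h1 := congrArg (cs.lift ⟨f, hlift⟩) h
  rw [hφ, hφ, hf, hf] at h1
  have h2 := congrArg Prod.snd (congrFun h1 (t, 0))
  simpa using h2

theorem right_exchange (l : List B) (i : B) (h : cs.IsRightDescent (cs.wordProd l) i) :
    cs.simple i ∈ cs.rightInvSeq l := by
  classical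
  obtain ⟨ω, hω, hw⟩ := cs.exists_isReduced (cs.wordProd l * cs.simple i)
  have e : cs.wordProd l = cs.wordProd (ω.concat i) := by
    rw [cs.wordProd_concat, ← hw]; simp
  have hred : cs.IsReduced (ω.concat i) := by
    have := cs.isRightDescent_iff.1 h
    unfold CoxeterSystem.IsReduced at hω ⊢
    rw [← e, ← this, hw, hω]; simp
  have hp := ris_parity cs _ _ e (cs.simple i)
  have hc : List.count (cs.simple i) (cs.rightInvSeq (ω.concat i)) = 1 := by
    apply List.count_eq_one_of_mem hred.nodup_rightInvSeq
    rw [cs.rightInvSeq_concat]; simp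
  rw [hc] at hp
  by_contra hn
  rw [List.count_eq_zero_of_not_mem hn] at hp
  simp at hp

theorem left_exchange (l : List B) (i : B) (h : cs.IsLeftDescent (cs.wordProd l) i) :
    cs.simple i ∈ cs.leftInvSeq l := by
  have := right_exchange cs l.reverse i (by
    rw [cs.wordProd_reverse, cs.isRightDescent_inv_iff]; exact h)
  rw [cs.rightInvSeq_reverse] at this
  simpa using this

theorem take_altW (a b : B) (n j : ℕ) (h : j ≤ n) : (altW a b n).take j = altW a b j := by
  rw [altW, altW, ← List.map_take, List.take_range, min_eq_left h]

theorem length_altW (a b : B) (n : ℕ) : (altW a b n).length = n := by simp [altW]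

theorem dihedral_start [Fintype B] (w : W) (k : ℕ) (a b : B) (hab : a ≠ b)
    (hk : M a b = 0 ∨ k ≤ M a b)
    (ha : cs.IsLeftDescent w a) (hb : cs.IsLeftDescent w b) :
    ∃ v, cs.wordProd (altW a b k ++ v) = w ∧ cs.IsReduced (altW a b k ++ v) := by
  induction k generalizing a b with
  | zero =>
    obtain ⟨v, hv, rfl⟩ := cs.exists_isReduced w
    exact ⟨v, rfl, hv⟩
  | succ k ih =>
    have hsymm : M b a = M a b := M.symmetric b a
    obtain ⟨v, hv, hred⟩ := ih b a hab.symm (by rw [hsymm]; omega) hb ha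
    have hmem := left_exchange cs (altW b a k ++ v) a (by rw [hv]; exact ha)
    obtain ⟨j, hj, hjs⟩ := List.getElem_of_mem hmem
    have hj' : j < (altW b a k ++ v).length := by simpa using hj
    have herase : cs.simple a * w = cs.wordProd ((altW b a k ++ v).eraseIdx j) := by
      rw [← cs.getD_leftInvSeq_mul_wordProd, hv, List.getD_eq_getElem _ _ hj, hjs]
    rcases lt_or_ge j k with hlt | hge
    · exfalso
      have h1 := hjs
      rw [cs.getElem_leftInvSeq _ _ hj', List.take_append_of_le_length (by rw [length_altW]; omega),
        take_altW _ _ _ _ hlt.le, List.getElem_append_left (by rw [length_altW]; omega)] at h1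
      have h2 : (altW b a k)[j]'(by rw [length_altW]; omega) = altSeq b a j := by simp [altW]
      rw [h2] at h1
      apply geom_rep cs a b hab (j + 1) (by omega) (by omega)
      rw [altW_succ', altW_succ, cs.wordProd_cons, cs.wordProd_append, ← h1]
      simp
    · rw [List.eraseIdx_append_of_length_le (by rw [length_altW]; exact hge), length_altW] at herase
      have hw : w = cs.wordProd (altW a b (k + 1) ++ v.eraseIdx (j - k)) := by
        rw [altW_succ', List.cons_append, cs.wordProd_cons, ← herase]; simp
      refine ⟨v.eraseIdx (j - k), hw.symm, ?_⟩
      unfold CoxeterSystem.IsReduced at hred ⊢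
      rw [← hw]
      rw [hv] at hred
      rw [hred]
      simp only [List.length_append, length_altW] at hj' ⊢
      rw [List.length_eraseIdx_of_lt (by omega)]
      omega

theorem altW_eq_alternatingWord (a b : B) (n : ℕ) : altW a b n =
    if Even n then CoxeterSystem.alternatingWord a b n
    else CoxeterSystem.alternatingWord b a n := by
  induction n with
  | zero => simp [altW, CoxeterSystem.alternatingWord]
  | succ n ih =>
    rw [altW_succ, ih, CoxeterSystem.alternatingWord_succ, CoxeterSystem.alternatingWord_succ]
    by_cases h : Even n <;> simp [altSeq, h, Nat.even_add_one]

theorem matsumoto [Fintype B] (R : List B → List B → Prop) (hrefl : ∀ l, R l l)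
    (htrans : ∀ l₁ l₂ l₃, R l₁ l₂ → R l₂ l₃ → R l₁ l₃)
    (hcons : ∀ s l l', R l l' → R (s :: l) (s :: l'))
    (hbraid : ∀ a b, a ≠ b → M a b ≠ 0 → ∀ v, R (altW a b (M a b) ++ v) (altW b a (M a b) ++ v))
    (l l' : List B) (h : cs.wordProd l = cs.wordProd l')
    (hl : cs.IsReduced l) (hl' : cs.IsReduced l') : R l l' := by
  induction hn : l.length generalizing l l' with
  | zero =>
    have hlen : l'.length = 0 := by rw [← hl', ← h, hl, hn]
    rw [List.length_eq_zero_iff] at hn hlen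
    rw [hn, hlen]; exact hrefl _
  | succ n ih =>
    have same : ∀ s u u', cs.wordProd (s :: u) = cs.wordProd (s :: u') → cs.IsReduced (s :: u) →
        cs.IsReduced (s :: u') → (s :: u).length = n + 1 → R (s :: u) (s :: u') := by
      intro s u u' e r r' hlen
      apply hcons
      apply ih
      · rw [cs.wordProd_cons, cs.wordProd_cons] at e
        exact mul_left_cancel e
      · exact r.drop 1
      · exact r'.drop 1
      · simpa using hlen
    have hlen : l'.length = n + 1 := by rw [← hl', ← h, hl, hn]
    have desc : ∀ s u, cs.IsReduced (s :: u) → cs.IsLeftDescent (cs.wordProd (s :: u)) s := by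
      intro s u r
      have h2 := r.drop 1
      unfold CoxeterSystem.IsReduced at r h2
      unfold CoxeterSystem.IsLeftDescent
      rw [r, cs.wordProd_cons]
      simp only [List.drop_succ_cons, List.drop_zero] at h2
      simp [h2]
    obtain _ | ⟨a, u⟩ := l
    · simp at hn
    obtain _ | ⟨b, u'⟩ := l'
    · simp at hlen
    by_cases hab : a = b
    · subst hab
      exact same a u u' h hl hl' hn
    have da := desc a u hl
    have db := desc b u' hl'
    rw [← h] at db
    have hM0 : M a b ≠ 0 := by
      intro h0
      obtain ⟨v, hv, hr⟩ := dihedral_start cs _ (n + 2) a b hab (Or.inl h0) da db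
      unfold CoxeterSystem.IsReduced at hr hl
      rw [hv, hl, hn] at hr
      simp only [List.length_append, length_altW] at hr
      omega
    obtain ⟨v, hv, hr⟩ := dihedral_start cs _ (M a b) a b hab (Or.inr le_rfl) da db
    obtain ⟨m, hm⟩ : ∃ m, M a b = m + 1 := ⟨M a b - 1, by omega⟩
    have hprod : cs.wordProd (altW a b (M a b)) = cs.wordProd (altW b a (M a b)) := by
      have h1 := cs.wordProd_braidWord_eq a b
      unfold CoxeterSystem.braidWord at h1
      rw [M.symmetric b a] at h1
      rw [altW_eq_alternatingWord, altW_eq_alternatingWord]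
      split_ifs
      · exact h1
      · exact h1.symm
    have hv' : cs.wordProd (altW b a (M a b) ++ v) = cs.wordProd (a :: u) := by
      rw [cs.wordProd_append, ← hprod, ← cs.wordProd_append, hv]
    have hr' : cs.IsReduced (altW b a (M a b) ++ v) := by
      unfold CoxeterSystem.IsReduced at hr ⊢
      rw [hv', ← hv, hr]; simp [length_altW]
    have e1 : R (a :: u) (altW a b (M a b) ++ v) := by
      rw [hm, altW_succ', List.cons_append] at hv hr ⊢
      exact same a _ _ hv.symm hl hr hn
    have e2 : R (altW b a (M a b) ++ v) (b :: u') := by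
      rw [h] at hv'
      have hle : (altW b a (M a b) ++ v).length = n + 1 := by
        rw [← hr', hv', hl', hlen]
      rw [hm, altW_succ', List.cons_append] at hv' hr' hle ⊢
      exact same b _ _ hv' hr' hl' hle
    exact htrans _ _ _ e1 (htrans _ _ _ (hbraid a b hab hM0 v) e2)

end cox
section fin
variable {V : Type*} [AddCommGroup V] [Module ℝ V] {B : Type*}

theorem pitman_rescale (a : V) (f : Module.Dual ℝ V) {c : ℝ} (hc : 0 < c) :
    pitman (c • a) (c⁻¹ • f) = pitman a f := by
  funext π t
  change π t - rinf (fun s => c⁻¹ * f (π s)) t • c • a = π t - rinf (fun s => f (π s)) t • a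
  rw [rinf_mul (inv_nonneg.2 hc.le), smul_smul]
  congr 2
  field_simp

theorem pitmanWord_congr_maps (α α' : B → V) (αv αv' : B → Module.Dual ℝ V)
    (h : ∀ s, pitman (α s) (αv s) = pitman (α' s) (αv' s)) (l : List B) :
    pitmanWord α αv l = pitmanWord α' αv' l := by
  unfold pitmanWord
  simp only [h]

theorem pitmanWord_local (α : B → V) (αv : B → Module.Dual ℝ V) (l : List B) {T : ℝ}
    {π π' : ℝ → V} (h : ∀ t ∈ Set.Icc 0 T, π t = π' t) :
    ∀ t ∈ Set.Icc 0 T, pitmanWord α αv l π t = pitmanWord α αv l π' t := by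
  induction l with
  | nil => exact h
  | cons s l ih =>
    intro t ht
    change pitman (α s) (αv s) (pitmanWord α αv l π) t = pitman (α s) (αv s) (pitmanWord α αv l π') t
    unfold pitman
    have e : (fun u => αv s (pitmanWord α αv l π u)) '' Set.Icc 0 t
        = (fun u => αv s (pitmanWord α αv l π' u)) '' Set.Icc 0 t := by
      apply Set.image_congr
      intro u hu
      rw [ih u ⟨hu.1, hu.2.trans ht.2⟩]
    rw [e, ih t ht]

end fin

theorem braid_general {V : Type*} [NormedAddCommGroup V] [NormedSpace ℝ V] [FiniteDimensional ℝ V]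
    {B : Type*} (α : B → V) (αv : B → Module.Dual ℝ V) (hpair : ∀ s, αv s (α s) = 2)
    (a b : B) (hne : a ≠ b) (m : ℕ) (hm : 2 ≤ m)
    (hM : (m = 2 ∧ αv a (α b) = 0 ∧ αv b (α a) = 0) ∨
      (αv a (α b) < 0 ∧ αv b (α a) < 0 ∧
        αv a (α b) * αv b (α a) = 4 * Real.cos (Real.pi / (m : ℝ)) ^ 2))
    {π : ℝ → V} (h : ContinuousOn π (Set.Ici 0)) :
    pitmanWord α αv (altW a b m) π = pitmanWord α αv (altW b a m) π := by
  classical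
  have hU : ∀ i < m, 0 ≤ chebU (2 * Real.cos (Real.pi / m)) (i + 1) := by
    intro i hi
    rcases Nat.lt_or_ge (i + 1) m with h1 | h1
    · exact (chebU_pos hm (Nat.succ_pos i) h1).le
    · rw [show i + 1 = m by omega, chebU_eq_zero hm]
  have hU0 := chebU_eq_zero hm
  rcases hM with ⟨h2, hab, hba⟩ | ⟨hp, hq, hpq⟩
  · have hx : 2 * Real.cos (Real.pi / m) = 0 := by rw [h2]; simp
    exact pitmanWord_braid α αv a b (hpair a) (hpair b) (by rw [hab, hx, neg_zero])
      (by rw [hba, hx, neg_zero]) m hU (by omega) hU0 h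
  · set x := 2 * Real.cos (Real.pi / m) with hx
    have hm' : (2:ℝ) ≤ m := by exact_mod_cast hm
    have hx0 : 0 ≤ x := by
      have : 0 ≤ Real.cos (Real.pi / m) := by
        apply Real.cos_nonneg_of_neg_pi_div_two_le_of_le
        · have : 0 ≤ Real.pi / m := by have := Real.pi_pos; positivity
          linarith [Real.pi_pos]
        · exact div_le_div_of_nonneg_left Real.pi_pos.le (by norm_num) hm'
      linarith
    have hxx : αv a (α b) * αv b (α a) = x * x := by rw [hpq, hx]; ring
    have hxpos : 0 < x := by
      rcases hx0.eq_or_lt with h0 | h0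
      · rw [← h0] at hxx
        nlinarith [mul_pos_of_neg_of_neg hp hq]
      · exact h0
    set c := x / (-αv b (α a)) with hc
    have hcpos : 0 < c := div_pos hxpos (by linarith)
    let α' : B → V := fun s => if s = a then c • α s else α s
    let αv' : B → Module.Dual ℝ V := fun s => if s = a then c⁻¹ • αv s else αv s
    have hα : ∀ s, pitman (α s) (αv s) = pitman (α' s) (αv' s) := by
      intro s
      by_cases hs : s = a
      · simp only [α', αv', if_pos hs]
        exact (pitman_rescale _ _ hcpos).symm
      · simp only [α', αv', if_neg hs]
    have hαa : α' a = c • α a := by simp [α']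
    have hαb : α' b = α b := by simp [α', hne.symm]
    have hva : αv' a = c⁻¹ • αv a := by simp [αv']
    have hvb : αv' b = αv b := by simp [αv', hne.symm]
    rw [pitmanWord_congr_maps α α' αv αv' hα, pitmanWord_congr_maps α α' αv αv' hα]
    have hqne : αv b (α a) ≠ 0 := hq.ne
    have hxne := hxpos.ne'
    have hcq : c * αv b (α a) = -x := by rw [hc]; field_simp
    refine pitmanWord_braid α' αv' a b (x := x) ?_ ?_ ?_ ?_ m hU (by omega) hU0 h
    · rw [hαa, hva]
      simp only [LinearMap.smul_apply, map_smul, smul_eq_mul, hpair]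
      field_simp
    · rw [hαb, hvb, hpair]
    · rw [hαb, hva]
      simp only [LinearMap.smul_apply, smul_eq_mul]
      rw [inv_mul_eq_iff_eq_mul₀ hcpos.ne']
      apply mul_right_cancel₀ hqne
      rw [hxx]
      linear_combination x * hcq
    · rw [hαa, hvb, map_smul, smul_eq_mul, hcq]

/-- Well-definedness of `P_w`: in the Coxeter setting, the composition of Pitman
transforms along a reduced word for `w ∈ W` does not depend on the chosen reduced word. -/
theorem pitmanWord_well_defined
    {V : Type*} [NormedAddCommGroup V] [NormedSpace ℝ V] [FiniteDimensional ℝ V]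
    (T : ℝ) (hT : 0 < T)
    {B : Type*} [Fintype B] {W : Type*} [Group W]
    (M : CoxeterMatrix B) (cs : CoxeterSystem M W)
    (α : B → V) (αv : B → Module.Dual ℝ V)
    (hpair : ∀ s, αv s (α s) = 2)
    (ρ : W →* (V ≃ₗ[ℝ] V)) (hρinj : Function.Injective ρ)
    (hρs : ∀ s v, ρ (cs.simple s) v = v - αv s v • α s)
    (hM : ∀ s s' : B, s ≠ s' →
      (M s s' = 2 ∧ αv s (α s') = 0 ∧ αv s' (α s) = 0) ∨
      (αv s (α s') < 0 ∧ αv s' (α s) < 0 ∧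
        αv s (α s') * αv s' (α s) = 4 * Real.cos (Real.pi / (M s s' : ℝ)) ^ 2))
    (w : W) (l l' : List B)
    (hl : cs.wordProd l = w) (hl' : cs.wordProd l' = w)
    (hlred : cs.IsReduced l) (hl'red : cs.IsReduced l')
    (π : ℝ → V) (hcont : ContinuousOn π (Set.Icc 0 T)) (h0 : π 0 = 0) :
    ∀ t ∈ Set.Icc 0 T, pitmanWord α αv l π t = pitmanWord α αv l' π t := by
  have hR : ∀ π : ℝ → V, ContinuousOn π (Set.Ici 0) → pitmanWord α αv l π = pitmanWord α αv l' π := by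
    refine matsumoto cs (fun l l' => ∀ π : ℝ → V, ContinuousOn π (Set.Ici 0) →
      pitmanWord α αv l π = pitmanWord α αv l' π) (fun _ _ _ => rfl)
      (fun l₁ l₂ l₃ h1 h2 π hπ => (h1 π hπ).trans (h2 π hπ)) ?_ ?_ l l' (hl.trans hl'.symm)
      hlred hl'red
    · intro s l l' h π hπ
      change pitman (α s) (αv s) (pitmanWord α αv l π) = pitman (α s) (αv s) (pitmanWord α αv l' π)
      rw [h π hπ]
    · intro a b hab hM0 v π hπ
      rw [pitmanWord_append, pitmanWord_append]
      have h1 := M.off_diagonal a b hab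
      exact braid_general α αv hpair a b hab (M a b) (by omega) (hM a b hab)
        (pitmanWord_cont α αv v hπ)
  let π' : ℝ → V := fun t => π (max 0 (min t T))
  have hmem : ∀ t : ℝ, max 0 (min t T) ∈ Set.Icc 0 T := fun t =>
    ⟨le_max_left _ _, max_le hT.le (min_le_right _ _)⟩
  have hπ' : ContinuousOn π' (Set.Ici 0) :=
    (hcont.comp_continuous (by fun_prop) hmem).continuousOn
  have hagree : ∀ t ∈ Set.Icc 0 T, π t = π' t := by
    intro t ht
    simp only [π']
    rw [min_eq_left ht.2, max_eq_right ht.1]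
  intro t ht
  rw [pitmanWord_local α αv l hagree t ht, pitmanWord_local α αv l' hagree t ht, hR π' hπ']
end

section
/- In the Coxeter setting below, let w ∈ W and set L_w = { s ∈ S : ℓ(σ_s w) < ℓ(w) } and R_w = { s ∈ S : ℓ(w σ_s) < ℓ(w) }, where ℓ is the length function. Then: (a) for every continuous path π : [0,T] → V with π(0) = 0 and every s ∈ L_w, one has α_s∨((P_w π)(t)) ≥ 0 for all t ∈ [0,T]; (b) P_{α_s} ∘ P_w = P_w for all s ∈ L_w; (c) P_w ∘ P_{α_s} = P_w for all s ∈ R_w. -/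
namespace PitAux

/-- Alternating word `i j i …` of length `n`, starting with `i`. -/
def alt {B : Type*} (i j : B) : ℕ → List B
  | 0 => []
  | n + 1 => i :: alt j i n

theorem alt_length {B : Type*} (i j : B) (n : ℕ) : (alt i j n).length = n := by
  induction n generalizing i j with
  | zero => rfl
  | succ n ih => simp [alt, ih]

theorem alt_snoc_two {B : Type*} (i j : B) (m : ℕ) :
    alt i j (2 * m + 2) = alt i j (2 * m) ++ [i, j] := by
  induction m with
  | zero => rfl
  | succ m ih =>
    have h : alt i j (2 * (m + 1) + 2) = i :: j :: alt i j (2 * m + 2) := rfl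
    have h' : alt i j (2 * (m + 1)) = i :: j :: alt i j (2 * m) := rfl
    rw [h, ih, h']; rfl

theorem alt_reverse {B : Type*} (i j : B) (m : ℕ) :
    (alt i j (2 * m)).reverse = alt j i (2 * m) := by
  induction m with
  | zero => rfl
  | succ m ih =>
    have h' : alt i j (2 * (m + 1)) = i :: j :: alt i j (2 * m) := rfl
    rw [h', mul_add, mul_one, alt_snoc_two, ← ih]
    simp

theorem alt_prod_even {B G : Type*} [Monoid G] (f : B → G) (i j : B) (m : ℕ) :
    ((alt i j (2 * m)).map f).prod = (f i * f j) ^ m := by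
  induction m with
  | zero => simp [alt]
  | succ m ih =>
    have h' : alt i j (2 * (m + 1)) = i :: j :: alt i j (2 * m) := rfl
    rw [h', pow_succ']
    simp [ih, mul_assoc]

theorem alt_prod_odd {B G : Type*} [Monoid G] (f : B → G) (i j : B) (m : ℕ) :
    ((alt i j (2 * m + 1)).map f).prod = (f i * f j) ^ m * f i := by
  induction m with
  | zero => simp [alt]
  | succ m ih =>
    have h' : alt i j (2 * (m + 1) + 1) = i :: j :: alt i j (2 * m + 1) := rfl
    rw [h', pow_succ']
    simp [ih, mul_assoc]

section Cox
variable {B : Type*} {W : Type*} [Group W] {M : CoxeterMatrix B} (cs : CoxeterSystem M W)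

theorem lis_alt (i j : B) (n : ℕ) :
    cs.leftInvSeq (alt i j n) =
      (List.range n).map (fun k => (cs.simple i * cs.simple j) ^ k * cs.simple i) := by
  induction n generalizing i j with
  | zero => rfl
  | succ n ih =>
    rw [alt, CoxeterSystem.leftInvSeq, ih, List.range_succ_eq_map]
    simp only [List.map_cons, List.map_map, pow_zero, one_mul]
    congr 1
    apply List.map_congr_left
    intro k _
    simp only [Function.comp, MulAut.conj_apply, CoxeterSystem.inv_simple]
    have : ∀ k, cs.simple i * ((cs.simple j * cs.simple i) ^ k) =
        (cs.simple i * cs.simple j) ^ k * cs.simple i := by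
      intro k
      induction k with
      | zero => simp
      | succ k ih => rw [pow_succ, ← mul_assoc, ih, pow_succ]; simp [mul_assoc]
    rw [← mul_assoc, this, pow_succ]
    simp [mul_assoc]

open Classical in
/-- The action of a generator on pairs (element, sign). -/
noncomputable def refl (i : B) : Function.End (W × ZMod 2) :=
  fun p => (cs.simple i * p.1 * cs.simple i, p.2 + if p.1 = cs.simple i then 1 else 0)

open Classical in
theorem refl_prod (l : List B) (t : W) (e : ZMod 2) :
    ((l.map (refl cs)).prod : Function.End (W × ZMod 2)) (t, e) =
      (cs.wordProd l * t * (cs.wordProd l)⁻¹, e + ((cs.rightInvSeq l).count t : ℕ)) := by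
  induction l with
  | nil => simp; rfl
  | cons i l ih =>
    rw [List.map_cons, List.prod_cons]
    change refl cs i (((l.map (refl cs)).prod : Function.End (W × ZMod 2)) (t, e)) = _
    rw [ih]
    simp only [refl, CoxeterSystem.rightInvSeq, cs.wordProd_cons, List.count_cons]
    refine Prod.ext ?_ ?_
    · simp [mul_assoc]
    · simp only [Nat.cast_add, add_assoc]
      congr 2
      have : (cs.wordProd l * t * (cs.wordProd l)⁻¹ = cs.simple i) ↔
          ((cs.wordProd l)⁻¹ * cs.simple i * cs.wordProd l = t) := by
        constructor
        · intro h; rw [← h]; group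
        · intro h; rw [← h]; group
      by_cases h : cs.wordProd l * t * (cs.wordProd l)⁻¹ = cs.simple i
      · simp [h, this.1 h]
      · rw [if_neg h, if_neg]
        · simp
        · simpa using fun h' => h (this.2 h')

open Classical in
theorem lis_alt_count_even (i j : B) (t : W) :
    (((cs.leftInvSeq (alt i j (2 * M i j))).count t : ℕ) : ZMod 2) = 0 := by
  rw [lis_alt, two_mul, List.range_add, List.map_append, List.count_append, List.map_map]
  have : ((fun k => (cs.simple i * cs.simple j) ^ k * cs.simple i) ∘ fun x => M i j + x) =
      (fun k => (cs.simple i * cs.simple j) ^ k * cs.simple i) := by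
    funext k
    simp [pow_add, cs.simple_mul_simple_pow]
  rw [this]
  push_cast
  exact CharTwo.add_self_eq_zero _

theorem refl_liftable : M.IsLiftable (refl cs) := by
  classical
  intro i j
  rw [← alt_prod_even]
  funext ⟨t, e⟩
  rw [refl_prod]
  have h1 : cs.wordProd (alt i j (2 * M i j)) = 1 := by
    rw [CoxeterSystem.wordProd, alt_prod_even, cs.simple_mul_simple_pow]
  have h2 : cs.rightInvSeq (alt i j (2 * M i j)) =
      (cs.leftInvSeq (alt j i (2 * M j i))).reverse := by
    rw [← alt_reverse, cs.rightInvSeq_reverse, M.symmetric]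
  rw [h1, h2, List.count_reverse, lis_alt_count_even]
  simp; rfl

open Classical in
theorem ris_count_eq (l l' : List B) (h : cs.wordProd l = cs.wordProd l') (t : W) :
    (((cs.rightInvSeq l).count t : ℕ) : ZMod 2) = ((cs.rightInvSeq l').count t : ℕ) := by
  have key : ∀ l : List B, cs.lift ⟨refl cs, refl_liftable cs⟩ (cs.wordProd l) =
      (l.map (refl cs)).prod := by
    intro l
    induction l with
    | nil => simp
    | cons i l ih => simp [cs.wordProd_cons, ih, cs.lift_apply_simple (refl_liftable cs)]
  have h1 := congrArg (fun F : Function.End (W × ZMod 2) => (F (t, 0)).2)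
    ((key l).symm.trans ((congrArg _ h).trans (key l')))
  simpa [refl_prod] using h1

/-- Exchange property. -/
theorem exchange (l : List B) (s : B)
    (h : cs.length (cs.simple s * cs.wordProd l) < cs.length (cs.wordProd l)) :
    cs.simple s ∈ cs.leftInvSeq l := by
  classical
  obtain ⟨l', hl', hw⟩ := cs.exists_isReduced (cs.simple s * cs.wordProd l)
  have hlen := (cs.isLeftDescent_iff).1 h
  have hprod : cs.wordProd (s :: l') = cs.wordProd l := by
    rw [cs.wordProd_cons, ← hw]; simp
  have hred : cs.IsReduced (s :: l') := by
    unfold CoxeterSystem.IsReduced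
    rw [hprod, ← hlen, hw, hl'.eq]; simp
  have hc : (cs.leftInvSeq (s :: l')).count (cs.simple s) = 1 := by
    apply List.count_eq_one_of_mem hred.nodup_leftInvSeq
    simp [CoxeterSystem.leftInvSeq]
  have := ris_count_eq cs l.reverse (s :: l').reverse
    (by rw [cs.wordProd_reverse, cs.wordProd_reverse, hprod]) (cs.simple s)
  rw [cs.rightInvSeq_reverse, cs.rightInvSeq_reverse, List.count_reverse, List.count_reverse, hc]
    at this
  by_contra hn
  rw [List.count_eq_zero_of_not_mem hn] at this
  revert this
  decide

theorem alt_step (hord : ∀ i j : B, i ≠ j → ∀ p : ℕ, 0 < p →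
      (cs.simple i * cs.simple j) ^ p = 1 → M i j ≠ 0 ∧ M i j ≤ p)
    (i j : B) (hij : i ≠ j) (w : W)
    (hi : ∃ r, cs.IsReduced (i :: r) ∧ cs.wordProd (i :: r) = w)
    (hj : ∃ r, cs.IsReduced (j :: r) ∧ cs.wordProd (j :: r) = w) (k : ℕ)
    (hk : M i j = 0 ∨ k + 1 ≤ M i j) :
    (∃ r, cs.IsReduced (alt i j (k + 1) ++ r) ∧ cs.wordProd (alt i j (k + 1) ++ r) = w) ∧
    (∃ r, cs.IsReduced (alt j i (k + 1) ++ r) ∧ cs.wordProd (alt j i (k + 1) ++ r) = w) := by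
  induction k with
  | zero => exact ⟨hi, hj⟩
  | succ k ih =>
    have aux : ∀ i j : B, i ≠ j → (M i j = 0 ∨ k + 1 + 1 ≤ M i j) →
        (∃ r, cs.IsReduced (j :: r) ∧ cs.wordProd (j :: r) = w) →
        (∃ r, cs.IsReduced (alt i j (k + 1) ++ r) ∧ cs.wordProd (alt i j (k + 1) ++ r) = w) →
        (∃ r, cs.IsReduced (alt j i (k + 1 + 1) ++ r) ∧
          cs.wordProd (alt j i (k + 1 + 1) ++ r) = w) := by
      rintro i j hij hk ⟨a, ha, haw⟩ ⟨r, hr, hrw⟩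
      have hdesc : cs.length (cs.simple j * w) < cs.length w := by
        rw [← haw, ha.eq, cs.wordProd_cons]
        simp only [CoxeterSystem.simple_mul_simple_cancel_left, List.length_cons]
        exact Nat.lt_succ_of_le (cs.length_wordProd_le a)
      have hmem := exchange cs (alt i j (k + 1) ++ r) j (by rw [hrw]; exact hdesc)
      obtain ⟨p, hp, hpe⟩ := List.mem_iff_getElem.1 hmem
      have hp' : p < (alt i j (k + 1) ++ r).length := by simpa using hp
      have herase := cs.getD_leftInvSeq_mul_wordProd (alt i j (k + 1) ++ r) p
      rw [List.getD_eq_getElem _ _ hp, hpe, hrw] at herase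
      by_cases hpk : p < k + 1
      · exfalso
        have h1 : cs.leftInvSeq (alt i j (k + 1)) =
            (cs.leftInvSeq (alt i j (k + 1) ++ r)).take (k + 1) := by
          rw [← cs.leftInvSeq_take, List.take_left' (alt_length i j (k + 1))]
        have h2 : (cs.simple i * cs.simple j) ^ p * cs.simple i = cs.simple j := by
          have h3 : (cs.leftInvSeq (alt i j (k + 1)))[p]? =
              some ((cs.simple i * cs.simple j) ^ p * cs.simple i) := by
            rw [lis_alt]; simp [hpk]
          rw [h1, List.getElem?_take_of_lt hpk, List.getElem?_eq_getElem hp] at h3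
          exact (Option.some_injective _ h3).symm.trans hpe
        have h3 : (cs.simple i * cs.simple j) ^ (p + 1) = 1 := by
          rw [pow_succ, ← mul_assoc, h2]; simp
        have := hord i j hij (p + 1) (Nat.succ_pos p) h3
        omega
      · refine ⟨r.eraseIdx (p - (k + 1)), ?_⟩
        have he : (alt i j (k + 1) ++ r).eraseIdx p =
            alt i j (k + 1) ++ r.eraseIdx (p - (k + 1)) := by
          rw [List.eraseIdx_append_of_length_le (by rw [alt_length]; omega), alt_length]
        have hprod : cs.wordProd (alt j i (k + 1 + 1) ++ r.eraseIdx (p - (k + 1))) = w := by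
          rw [show alt j i (k + 1 + 1) = j :: alt i j (k + 1) from rfl, List.cons_append,
            cs.wordProd_cons, ← he, ← herase]
          simp
        refine ⟨?_, hprod⟩
        unfold CoxeterSystem.IsReduced
        rw [hprod, ← hrw, hr.eq]
        have := List.length_eraseIdx_add_one hp'
        rw [he] at this
        simp only [List.length_append, alt_length] at this ⊢
        omega
    have hk' : M j i = 0 ∨ k + 1 + 1 ≤ M j i := by rw [M.symmetric]; exact hk
    obtain ⟨h1, h2⟩ := ih (by omega)
    exact ⟨aux j i hij.symm hk' hi h2, aux i j hij hk hj h1⟩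

theorem braid_group (i j : B) :
    cs.wordProd (alt i j (M i j)) = cs.wordProd (alt j i (M i j)) := by
  unfold CoxeterSystem.wordProd
  have hpow := cs.simple_mul_simple_pow i j
  have hinv : ∀ k, ((cs.simple i * cs.simple j) ^ k)⁻¹ = (cs.simple j * cs.simple i) ^ k := by
    intro k; rw [← inv_pow]; simp
  rcases Nat.even_or_odd' (M i j) with ⟨k, hk | hk⟩
  · rw [hk, alt_prod_even, alt_prod_even, ← hinv, eq_inv_iff_mul_eq_one, ← pow_add, ← two_mul,
      ← hk, hpow]
  · rw [hk, alt_prod_odd, alt_prod_odd, ← hinv, eq_inv_mul_iff_mul_eq]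
    rw [hk] at hpow
    rw [← mul_assoc, ← pow_add, ← two_mul]
    rw [pow_succ, ← mul_assoc] at hpow
    rw [mul_eq_one_iff_eq_inv] at hpow
    simpa using hpow

/-- Matsumoto's theorem. -/
theorem matsumoto {G : Type*} [Monoid G] (f : B → G)
    (hord : ∀ i j : B, i ≠ j → ∀ p : ℕ, 0 < p →
      (cs.simple i * cs.simple j) ^ p = 1 → M i j ≠ 0 ∧ M i j ≤ p)
    (hbraid : ∀ i j : B, i ≠ j → M i j ≠ 0 →
      ((alt i j (M i j)).map f).prod = ((alt j i (M i j)).map f).prod)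
    (n : ℕ) (l l' : List B) (hn : l.length = n) (hl : cs.IsReduced l) (hl' : cs.IsReduced l')
    (h : cs.wordProd l = cs.wordProd l') : (l.map f).prod = (l'.map f).prod := by
  induction n generalizing l l' with
  | zero =>
    have h1 : l = [] := List.length_eq_zero_iff.1 hn
    have h2 : l'.length = 0 := by rw [← hl'.eq, ← h, hl.eq, hn]
    rw [h1, List.length_eq_zero_iff.1 h2]
  | succ n ih =>
    have same : ∀ (i : B) (a b : List B), (i :: a).length = n + 1 → cs.IsReduced (i :: a) →
        cs.IsReduced (i :: b) → cs.wordProd (i :: a) = cs.wordProd (i :: b) →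
        ((i :: a).map f).prod = ((i :: b).map f).prod := by
      intro i a b hn ha hb hab
      rw [cs.wordProd_cons, cs.wordProd_cons, mul_right_inj] at hab
      simp only [List.map_cons, List.prod_cons]
      rw [ih a b (by simpa using hn) (by simpa using ha.drop 1) (by simpa using hb.drop 1) hab]
    have hlen' : l'.length = n + 1 := by rw [← hl'.eq, ← h, hl.eq, hn]
    cases l with
    | nil => simp at hn
    | cons i a =>
      cases l' with
      | nil => simp at hlen'
      | cons j b =>
        by_cases hij : i = j
        · subst hij; exact same i a b hn hl hl' h
        · have step := alt_step cs hord i j hij _ ⟨a, hl, rfl⟩ ⟨b, hl', h.symm⟩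
          have hM : M i j ≠ 0 := by
            intro h0
            obtain ⟨⟨r, hr, hrw⟩, -⟩ := step (n + 1) (Or.inl h0)
            have : (alt i j (n + 1 + 1) ++ r).length = n + 1 := by
              rw [← hr.eq, hrw, hl.eq, hn]
            simp [alt_length] at this
            omega
          obtain ⟨m, hm⟩ := Nat.exists_eq_succ_of_ne_zero hM
          obtain ⟨⟨r, hr, hrw⟩, -⟩ := step m (Or.inr (by omega))
          have hb := hbraid i j hij hM
          have hg := braid_group cs i j
          rw [hm] at hb hg
          have hrw2 : cs.wordProd (alt j i (m + 1) ++ r) = cs.wordProd (i :: a) := by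
            rw [cs.wordProd_append, ← hg, ← cs.wordProd_append, hrw]
          have hr2 : cs.IsReduced (alt j i (m + 1) ++ r) := by
            unfold CoxeterSystem.IsReduced
            rw [hrw2, ← hrw, hr.eq]; simp [alt_length]
          rw [same i a (alt j i m ++ r) hn hl hr hrw.symm]
          rw [same j b (alt i j m ++ r) hlen' hl' hr2 (h.symm.trans hrw2.symm)]
          change ((alt i j (m + 1) ++ r).map f).prod = ((alt j i (m + 1) ++ r).map f).prod
          rw [List.map_append, List.map_append, List.prod_append, List.prod_append, hb]

end Cox
end PitAux

namespace PitAux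

theorem dih_facts {A B : ℝ} {m : ℕ} (hm : 2 ≤ m)
    (h : (m = 2 ∧ A = 0 ∧ B = 0) ∨
      (0 < A ∧ 0 < B ∧ A * B = 4 * Real.cos (Real.pi / (m : ℝ)) ^ 2)) :
    0 < Real.sin (Real.pi / (m : ℝ)) ∧ 4 - A * B ≠ 0 ∧
    ∃ μ : ℝ, 0 < μ ∧ A = 2 * Real.cos (Real.pi / (m : ℝ)) * μ ∧
      B * μ = 2 * Real.cos (Real.pi / (m : ℝ)) := by
  have hm' : (2 : ℝ) ≤ m := by exact_mod_cast hm
  have hpos : 0 < Real.pi / (m : ℝ) := by have := Real.pi_pos; positivity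
  have hle : Real.pi / (m : ℝ) ≤ Real.pi / 2 := by
    have := Real.pi_pos
    gcongr
  have hsin : 0 < Real.sin (Real.pi / (m : ℝ)) :=
    Real.sin_pos_of_pos_of_lt_pi hpos (by linarith [Real.pi_pos])
  have hcos : 0 ≤ Real.cos (Real.pi / (m : ℝ)) :=
    Real.cos_nonneg_of_neg_pi_div_two_le_of_le (by linarith) hle
  refine ⟨hsin, ?_, ?_⟩
  · rcases h with ⟨-, h1, h2⟩ | ⟨-, -, h3⟩
    · rw [h1, h2]; norm_num
    · rw [h3]
      have := Real.sin_sq_add_cos_sq (Real.pi / (m : ℝ))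
      have h4 : 0 < Real.sin (Real.pi / (m : ℝ)) ^ 2 := by positivity
      intro h5
      linarith
  · rcases h with ⟨h0, h1, h2⟩ | ⟨h1, h2, h3⟩
    · refine ⟨1, one_pos, ?_, ?_⟩ <;> simp [h0, h1, h2]
    · have hc : 0 < Real.cos (Real.pi / (m : ℝ)) := by
        rcases hcos.lt_or_eq with h | h
        · exact h
        · rw [← h] at h3
          have := mul_pos h1 h2
          norm_num at h3
          rcases h3 with h3 | h3 <;> linarith
      refine ⟨A / (2 * Real.cos (Real.pi / (m : ℝ))), by positivity, ?_, ?_⟩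
      · field_simp
      · rw [← mul_div_assoc, div_eq_iff (by positivity)]
        linarith

section Order
variable {V : Type*} [AddCommGroup V] [Module ℝ V] {B : Type*}

open Classical in
/-- Extended root, independent of the others. -/
noncomputable def xroot (α : B → V) (s : B) : V × (B → ℝ) := (α s, Pi.single s 1)

/-- Extended reflection. -/
noncomputable def xrefl (α : B → V) (αv : B → Module.Dual ℝ V) (s : B) :
    Function.End (V × (B → ℝ)) := fun v => v - αv s v.1 • xroot α s

theorem xroot_indep (α : B → V) {i j : B} (hij : i ≠ j) (x y x' y' : ℝ)
    (h : x • xroot α i + y • xroot α j = x' • xroot α i + y' • xroot α j) :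
    x = x' ∧ y = y' := by
  have h2 := congrArg Prod.snd h
  have hi := congrFun h2 i
  have hj := congrFun h2 j
  simp [xroot, hij, hij.symm] at hi hj
  exact ⟨hi, hj⟩

variable {W : Type*} [Group W] {M : CoxeterMatrix B} (cs : CoxeterSystem M W)

theorem xrefl_liftable (α : B → V) (αv : B → Module.Dual ℝ V)
    (hpair : ∀ s, αv s (α s) = 2)
    (ρ : W →* (V ≃ₗ[ℝ] V))
    (hρs : ∀ s v, ρ (cs.simple s) v = v - αv s v • α s)
    (hnd : ∀ i j, i ≠ j → M i j ≠ 0 → 4 - αv i (α j) * αv j (α i) ≠ 0) :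
    M.IsLiftable (xrefl α αv) := by
  intro i j
  by_cases hij : i = j
  · subst hij
    rw [M.diagonal, pow_one]
    funext v
    change xrefl α αv i (xrefl α αv i v) = v
    simp only [xrefl, Prod.fst_sub, Prod.smul_fst, map_sub, map_smul, smul_eq_mul]
    rw [show (xroot α i).1 = α i from rfl, hpair]
    module
  by_cases hM : M i j = 0
  · rw [hM, pow_zero]
  have h1 : ∀ (k : ℕ) (v : V × (B → ℝ)),
      (((xrefl α αv i * xrefl α αv j) ^ k) v).1 = ρ ((cs.simple i * cs.simple j) ^ k) v.1 ∧
      ∃ x y : ℝ, ((xrefl α αv i * xrefl α αv j) ^ k) v =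
        v + (x • xroot α i + y • xroot α j) := by
    intro k
    induction k with
    | zero =>
      intro v
      exact ⟨by simp; rfl, 0, 0, by simp; rfl⟩
    | succ k ih =>
      intro v
      obtain ⟨e1, x, y, e2⟩ := ih v
      have e3 : ((xrefl α αv i * xrefl α αv j) ^ (k + 1)) v =
          xrefl α αv i (xrefl α αv j (((xrefl α αv i * xrefl α αv j) ^ k) v)) := by
        rw [pow_succ']; rfl
      rw [e3]
      constructor
      · rw [pow_succ', map_mul, map_mul]
        simp only [LinearEquiv.mul_apply, hρs, ← e1, xrefl, xroot, Prod.fst_sub, Prod.smul_fst]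
      · rw [e2]
        simp only [xrefl]
        refine ⟨x - ?_, y - ?_, ?_⟩
        rotate_left 2
        · rw [sub_smul, sub_smul]
          rw [sub_sub, add_sub_assoc]
          congr 1
          rw [add_comm (_ • xroot α j) (_ • xroot α i), add_sub_add_comm]
  funext v
  obtain ⟨e1, x, y, e2⟩ := h1 (M i j) v
  rw [e2]
  rw [cs.simple_mul_simple_pow, map_one, e2] at e1
  have e3 : x • α i + y • α j = 0 := by simpa [xroot] using e1
  have hi := congrArg (αv i) e3
  have hj := congrArg (αv j) e3
  simp only [map_add, map_smul, hpair, smul_eq_mul, map_zero] at hi hj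
  have hn := hnd i j hij hM
  have hx : x = 0 := by
    apply (mul_eq_zero.1 _).resolve_right hn
    linear_combination 2 * hi - αv i (α j) * hj
  have hy : y = 0 := by
    apply (mul_eq_zero.1 _).resolve_right hn
    linear_combination 2 * hj - αv j (α i) * hi
  rw [hx, hy]; simp; rfl

theorem order_lemma (α : B → V) (αv : B → Module.Dual ℝ V)
    (hpair : ∀ s, αv s (α s) = 2)
    (ρ : W →* (V ≃ₗ[ℝ] V))
    (hρs : ∀ s v, ρ (cs.simple s) v = v - αv s v • α s)
    (hM : ∀ s s' : B, s ≠ s' →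
      (M s s' = 2 ∧ αv s (α s') = 0 ∧ αv s' (α s) = 0) ∨
      (αv s (α s') < 0 ∧ αv s' (α s) < 0 ∧
        αv s (α s') * αv s' (α s) = 4 * Real.cos (Real.pi / (M s s' : ℝ)) ^ 2))
    (i j : B) (hij : i ≠ j) (p : ℕ) (hp : 0 < p)
    (h1 : (cs.simple i * cs.simple j) ^ p = 1) : M i j ≠ 0 ∧ M i j ≤ p := by
  have two : ∀ i j, i ≠ j → M i j ≠ 0 → 2 ≤ M i j := by
    intro i j hij h0
    have := M.off_diagonal i j hij
    omega
  have dih : ∀ i j, i ≠ j → M i j ≠ 0 → _ := fun i j hij h0 =>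
    dih_facts (A := - αv j (α i)) (B := - αv i (α j)) (two i j hij h0) (by
      rcases hM i j hij with ⟨a, b, c⟩ | ⟨a, b, c⟩
      · exact Or.inl ⟨a, by simp [c], by simp [b]⟩
      · exact Or.inr ⟨by linarith, by linarith, by linarith⟩)
  have hlift := xrefl_liftable cs α αv hpair ρ hρs (fun i j hij h0 => by
    have := (dih i j hij h0).2.1
    intro h; apply this; linarith)
  have hg : (xrefl α αv i * xrefl α αv j) ^ p = 1 := by
    have := congrArg (cs.lift ⟨xrefl α αv, hlift⟩) h1
    simpa [cs.lift_apply_simple hlift] using this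
  have hstep : ∀ x y : ℝ, xrefl α αv i (xrefl α αv j (x • xroot α i + y • xroot α j)) =
      (-x + (- αv i (α j)) * (-y + (- αv j (α i)) * x)) • xroot α i +
        (-y + (- αv j (α i)) * x) • xroot α j := by
    intro x y
    simp only [xrefl, Prod.fst_sub, Prod.fst_add, Prod.smul_fst, map_sub, map_add, map_smul,
      smul_eq_mul, show ∀ s, (xroot α s).1 = α s from fun _ => rfl, hpair]
    module
  have hsucc : ∀ k v, ((xrefl α αv i * xrefl α αv j) ^ (k + 1)) v =
      xrefl α αv i (xrefl α αv j (((xrefl α αv i * xrefl α αv j) ^ k) v)) := by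
    intro k v; rw [pow_succ']; rfl
  have hfin := congrFun hg (xroot α i)
  by_cases h0 : M i j = 0
  · exfalso
    have hab : αv i (α j) * αv j (α i) = 4 := by
      rcases hM i j hij with ⟨a, -⟩ | ⟨-, -, c⟩
      · omega
      · rw [c, h0]; simp
    have hk : ∀ k : ℕ, ((xrefl α αv i * xrefl α αv j) ^ k) (xroot α i) =
        (2 * (k : ℝ) + 1) • xroot α i + ((- αv j (α i)) * k) • xroot α j := by
      intro k
      induction k with
      | zero => simp; rfl
      | succ k ih =>
        rw [hsucc, ih, hstep]
        congr 2
        · push_cast; linear_combination ((k : ℝ) + 1) * hab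
        · push_cast; ring
    rw [hk p] at hfin
    have := (xroot_indep α hij _ _ 1 0 (by rw [hfin]; simp; rfl)).1
    have hp' : (0 : ℝ) < p := by exact_mod_cast hp
    linarith
  · refine ⟨h0, ?_⟩
    by_contra hlt
    push Not at hlt
    obtain ⟨hsin, -, ν, hν, hB, hA⟩ := dih i j hij h0
    set θ := Real.pi / (M i j : ℝ) with hθ
    have hk : ∀ k : ℕ, ∃ x y : ℝ, ((xrefl α αv i * xrefl α αv j) ^ k) (xroot α i) =
        x • xroot α i + y • xroot α j ∧ x * Real.sin θ = Real.sin (2 * k * θ + θ) ∧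
        y * Real.sin θ = ν * Real.sin (2 * k * θ) := by
      intro k
      induction k with
      | zero => exact ⟨1, 0, by simp; rfl, by simp, by simp⟩
      | succ k ih =>
        obtain ⟨x, y, e, hx, hy⟩ := ih
        refine ⟨_, _, by rw [hsucc, e, hstep], ?_, ?_⟩
        all_goals
          have s1 : Real.sin (2 * ((k + 1 : ℕ) : ℝ) * θ) =
              2 * Real.cos θ * Real.sin (2 * k * θ + θ) - Real.sin (2 * k * θ) := by
            rw [show 2 * ((k + 1 : ℕ) : ℝ) * θ = (2 * k * θ + θ) + θ by push_cast; ring,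
              Real.sin_add (2 * k * θ + θ) θ, show Real.sin (2 * k * θ) =
              Real.sin ((2 * k * θ + θ) - θ) by ring_nf, Real.sin_sub (2 * k * θ + θ) θ]
            ring
          have s2 : Real.sin (2 * ((k + 1 : ℕ) : ℝ) * θ + θ) =
              2 * Real.cos θ * Real.sin (2 * ((k + 1 : ℕ) : ℝ) * θ)
                - Real.sin (2 * k * θ + θ) := by
            rw [Real.sin_add (2 * ((k + 1 : ℕ) : ℝ) * θ) θ, show Real.sin (2 * k * θ + θ) =
              Real.sin ((2 * ((k + 1 : ℕ) : ℝ) * θ) - θ) by push_cast; ring_nf,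
              Real.sin_sub (2 * ((k + 1 : ℕ) : ℝ) * θ) θ]
            ring
          have hyy : (-y + (- αv j (α i)) * x) * Real.sin θ =
              ν * Real.sin (2 * ((k + 1 : ℕ) : ℝ) * θ) := by
            rw [s1]
            linear_combination (-1) * hy + (-αv j (α i)) * hx +
              Real.sin (2 * k * θ + θ) * hB
        · rw [s2]
          linear_combination (-1) * hx + (-αv i (α j)) * hyy +
            Real.sin (2 * ((k + 1 : ℕ) : ℝ) * θ) * hA
        · exact hyy
    obtain ⟨x, y, e, hx, hy⟩ := hk p
    rw [e] at hfin
    obtain ⟨rfl, rfl⟩ := xroot_indep α hij _ _ 1 0 (by rw [hfin]; simp; rfl)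
    have hs : Real.sin (2 * p * θ) = 0 := by
      rw [zero_mul] at hy
      exact (mul_eq_zero.1 hy.symm).resolve_left hν.ne'
    rw [Real.sin_add, hs] at hx
    have hc : Real.cos (2 * p * θ) = 1 := by
      have : (Real.cos (2 * p * θ) - 1) * Real.sin θ = 0 := by linarith
      have := (mul_eq_zero.1 this).resolve_right hsin.ne'
      linarith
    have hp' : (0 : ℝ) < p := by exact_mod_cast hp
    have hlt' : (p : ℝ) < M i j := by exact_mod_cast hlt
    have hMp : (0 : ℝ) < M i j := by linarith
    have hpi := Real.pi_pos
    have hpos : 0 < 2 * p * θ := by rw [hθ]; positivity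
    have hlt2 : 2 * p * θ < 2 * Real.pi := by
      rw [hθ, ← mul_div_assoc, div_lt_iff₀ hMp]
      nlinarith
    have := (Real.cos_eq_one_iff_of_lt_of_lt (by linarith) hlt2).1 hc
    linarith

end Order
end PitAux

namespace PitAux

/-- Running infimum. -/
noncomputable def rinf (f : ℝ → ℝ) (t : ℝ) : ℝ := sInf (f '' Set.Icc 0 t)

/-- Continuous and null at zero. -/
def Nice (f : ℝ → ℝ) : Prop := Continuous f ∧ f 0 = 0

theorem rinf_neg (f : ℝ → ℝ) {t : ℝ} (ht : t < 0) : rinf f t = 0 := by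
  simp [rinf, Set.Icc_eq_empty (not_le.2 ht)]

theorem rinf_le {f : ℝ → ℝ} (hf : Continuous f) {s t : ℝ} (h0 : 0 ≤ s) (hst : s ≤ t) :
    rinf f t ≤ f s :=
  csInf_le (isCompact_Icc.image hf).bddBelow ⟨s, ⟨h0, hst⟩, rfl⟩

theorem rinf_exists {f : ℝ → ℝ} (hf : Continuous f) {t : ℝ} (ht : 0 ≤ t) :
    ∃ s, 0 ≤ s ∧ s ≤ t ∧ rinf f t = f s := by
  obtain ⟨s, hs, h⟩ := (isCompact_Icc.image hf).sInf_mem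
    (Set.Nonempty.image f (Set.nonempty_Icc.2 ht))
  exact ⟨s, hs.1, hs.2, h.symm⟩

theorem rinf_anti {f : ℝ → ℝ} (hf : Continuous f) {s t : ℝ} (h0 : 0 ≤ s) (hst : s ≤ t) :
    rinf f t ≤ rinf f s := by
  obtain ⟨u, hu, hus, e⟩ := rinf_exists hf h0
  rw [e]
  exact rinf_le hf hu (hus.trans hst)

theorem rinf_nice {f : ℝ → ℝ} (hf : Nice f) : Nice (rinf f) := by
  constructor
  · have h : rinf f = fun t => sInf ((fun u => f (max t 0 * u)) '' Set.Icc (0:ℝ) 1) := by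
      funext t
      rcases lt_or_ge t 0 with ht | ht
      · rw [rinf_neg f ht, max_eq_right ht.le]
        simp [hf.2]
      · rw [max_eq_left ht, rinf]
        congr 1
        ext y
        constructor
        · rintro ⟨s, hs, rfl⟩
          rcases ht.eq_or_lt with h | h
          · subst h
            have : s = 0 := le_antisymm hs.2 hs.1
            exact ⟨0, by simp, by simp [this]⟩
          · refine ⟨s / t, ⟨div_nonneg hs.1 ht, (div_le_one h).2 hs.2⟩, ?_⟩
            simp only
            rw [mul_div_cancel₀ _ h.ne']
        · rintro ⟨u, hu, rfl⟩
          exact ⟨t * u, ⟨mul_nonneg ht hu.1, mul_le_of_le_one_right ht hu.2⟩, rfl⟩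
    rw [h]
    have := hf.1
    exact isCompact_Icc.continuous_sInf (by fun_prop)
  · simp [rinf, hf.2]

theorem loc1 {z : ℝ → ℝ} (hz : Nice z) {u s t : ℝ} (hu : 0 ≤ u) (hus : u ≤ s) (hst : s ≤ t) :
    ∃ s', u ≤ s' ∧ s' ≤ t ∧ z s' - 2 * rinf z s' + rinf z u + rinf z t ≤ z s := by
  rcases (rinf_anti hz.1 hu hus).eq_or_lt with h | h
  · refine ⟨s, hus, hst, ?_⟩
    have := rinf_anti hz.1 (hu.trans hus) hst
    linarith
  · -- the first hitting time of level `rinf z u` after `u`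
    have hne : ({r | z r ≤ rinf z u} ∩ Set.Icc u s).Nonempty := by
      obtain ⟨r, hr0, hrs, e⟩ := rinf_exists hz.1 (hu.trans hus)
      have : u ≤ r := by
        by_contra hc
        have := rinf_le hz.1 hr0 (not_le.1 hc).le
        linarith
      exact ⟨r, by simp only [Set.mem_ofPred_eq]; linarith, this, hrs⟩
    have hcomp : IsCompact ({r | z r ≤ rinf z u} ∩ Set.Icc u s) :=
      isCompact_Icc.inter_left (isClosed_le hz.1 continuous_const)
    obtain ⟨s', ⟨hs1, hs2⟩, hs3⟩ := hcomp.exists_isLeast hne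
    simp only [Set.mem_ofPred_eq] at hs1
    have hzs : z s' = rinf z u := by
      obtain ⟨r, hr, hre⟩ := intermediate_value_Icc' hs2.1 (hz.1.continuousOn)
        ⟨hs1, rinf_le hz.1 hu le_rfl⟩
      have h1 := hs3 (a := r) ⟨hre.le, hr.1, hr.2.trans hs2.2⟩
      rw [← hre, le_antisymm h1 hr.2]
    refine ⟨s', hs2.1, hs2.2.trans hst, ?_⟩
    have hm : rinf z u ≤ rinf z s' := by
      obtain ⟨r, hr0, hrs, e⟩ := rinf_exists hz.1 (hu.trans hs2.1)
      rw [e]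
      by_contra hc
      push Not at hc
      have hur : u ≤ r := by
        by_contra hc'
        have := rinf_le hz.1 hr0 (not_le.1 hc').le
        linarith
      have h1 := hs3 (a := r) ⟨hc.le, hur, hrs.trans hs2.2⟩
      rw [le_antisymm hrs h1, hzs] at hc
      exact lt_irrefl _ hc
    have := rinf_le hz.1 (hu.trans hus) hst
    linarith

theorem loc2 {z : ℝ → ℝ} (hz : Nice z) {u s t : ℝ} (hu : 0 ≤ u) (hus : u ≤ s) (hst : s ≤ t) :
    ∃ s', u ≤ s' ∧ s' ≤ t ∧ z s' ≤ z s - 2 * rinf z s + rinf z u + rinf z t := by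
  have h1 := rinf_anti hz.1 hu hus
  rcases (rinf_anti hz.1 (hu.trans hus) hst).eq_or_lt with h | h
  · exact ⟨s, hus, hst, by linarith⟩
  · obtain ⟨r, hr0, hrs, e⟩ := rinf_exists hz.1 ((hu.trans hus).trans hst)
    have : s ≤ r := by
      by_contra hc
      have := rinf_le hz.1 hr0 (not_le.1 hc).le
      linarith
    have h2 := rinf_le hz.1 (hu.trans hus) le_rfl
    exact ⟨r, hus.trans this, hrs, by linarith⟩

theorem key {z R : ℝ → ℝ} (hz : Nice z) (hR : Nice R) {q : ℝ} (hq : 0 ≤ q) (t : ℝ) :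
    rinf (fun s => q * (z s - 2 * rinf z s) + rinf (fun u => R u + q * rinf z u) s) t
      + q * rinf z t = rinf (fun s => q * z s + rinf R s) t := by
  rcases lt_or_ge t 0 with ht | ht
  · simp [rinf_neg _ ht]
  have hm := rinf_nice hz
  have hRm : Nice (fun u => R u + q * rinf z u) :=
    ⟨by have := hR.1; have := hm.1; fun_prop, by simp [hR.2, hm.2]⟩
  have hI1 := rinf_nice hRm
  have hI2 := rinf_nice hR
  have c1 : Continuous (fun s => q * (z s - 2 * rinf z s) +
      rinf (fun u => R u + q * rinf z u) s) := by
    have := hz.1; have := hm.1; have := hI1.1; fun_prop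
  have c2 : Continuous (fun s => q * z s + rinf R s) := by
    have := hz.1; have := hI2.1; fun_prop
  apply le_antisymm
  · obtain ⟨s, hs0, hst, e⟩ := rinf_exists c2 ht
    obtain ⟨u, hu0, hus, e'⟩ := rinf_exists hR.1 hs0
    obtain ⟨s', h1, h2, h3⟩ := loc1 hz hu0 hus hst
    have h4 := rinf_le c1 (hu0.trans h1) h2
    have h5 := rinf_le hRm.1 hu0 h1
    have h6 := mul_le_mul_of_nonneg_left h3 hq
    rw [e]
    simp only [e']
    linarith
  · obtain ⟨s, hs0, hst, e⟩ := rinf_exists c1 ht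
    obtain ⟨u, hu0, hus, e'⟩ := rinf_exists hRm.1 hs0
    obtain ⟨s', h1, h2, h3⟩ := loc2 hz hu0 hus hst
    have h4 := rinf_le c2 (hu0.trans h1) h2
    have h5 := rinf_le hR.1 hu0 h1
    have h6 := mul_le_mul_of_nonneg_left h3 hq
    rw [e]
    simp only [e']
    linarith

theorem rinf_mul {z : ℝ → ℝ} (hz : Nice z) {q : ℝ} (hq : 0 ≤ q) (t : ℝ) :
    rinf (fun s => q * z s) t = q * rinf z t := by
  rcases lt_or_ge t 0 with ht | ht
  · simp [rinf_neg _ ht]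
  have c : Continuous (fun s => q * z s) := by have := hz.1; fun_prop
  apply le_antisymm
  · obtain ⟨s, hs0, hst, e⟩ := rinf_exists hz.1 ht
    rw [e]; exact rinf_le c hs0 hst
  · obtain ⟨s, hs0, hst, e⟩ := rinf_exists c ht
    rw [e]; exact mul_le_mul_of_nonneg_left (rinf_le hz.1 hs0 hst) hq

/-- Infimum over chains. -/
noncomputable def chain : ℕ → ℝ → ℝ → ℝ → ℝ → (ℝ → ℝ) → (ℝ → ℝ) → ℝ → ℝ
  | 0, _, _, _, _, _, _ => fun _ => 0
  | n + 1, p, q, A, B, x, y => rinf (fun s => q * x s + chain n q (A * q - p) B A y x s)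

/-- Nonnegativity of the first `n` coefficients. -/
def Pos : ℕ → ℝ → ℝ → ℝ → ℝ → Prop
  | 0, _, _, _, _ => True
  | n + 1, p, q, A, B => 0 ≤ q ∧ Pos n q (A * q - p) B A

/-- The `n`-th coefficient. -/
def Qs : ℕ → ℝ → ℝ → ℝ → ℝ → ℝ
  | 0, _, q, _, _ => q
  | n + 1, p, q, A, B => Qs n q (A * q - p) B A

theorem chain_nice (n : ℕ) (p q A B : ℝ) {x y : ℝ → ℝ} (hx : Nice x) (hy : Nice y) :
    Nice (chain n p q A B x y) := by
  induction n generalizing p q A B x y with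
  | zero => exact ⟨continuous_const, rfl⟩
  | succ n ih =>
    have h := ih q (A * q - p) B A hy hx
    apply rinf_nice
    exact ⟨by have := hx.1; have := h.1; fun_prop, by simp [hx.2, h.2]⟩

theorem chain_drop (n : ℕ) (p q A B : ℝ) (x y : ℝ → ℝ) (h : Qs n p q A B = 0) :
    chain (n + 1) p q A B x y = chain n p q A B x y := by
  induction n generalizing p q A B x y with
  | zero =>
    have h' : q = 0 := h
    subst h'
    funext t
    simp only [chain, rinf, zero_mul, add_zero]
    rcases (Set.Icc (0:ℝ) t).eq_empty_or_nonempty with h | h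
    · simp [h]
    · simp [h.image_const]
  | succ n ih =>
    rw [chain, ih q (A * q - p) B A y x h]
    rfl

theorem pos_mono (n : ℕ) (p q A B : ℝ) (h : Pos (n + 1) p q A B) : Pos n p q A B := by
  induction n generalizing p q A B with
  | zero => trivial
  | succ n ih => exact ⟨h.1, ih _ _ _ _ h.2⟩

theorem comb (k : ℕ) :
    (∀ (p q A B : ℝ) (x y : ℝ → ℝ), Nice x → Nice y → Pos (2 * k + 1) p q A B →
      ∀ t, chain (2 * k) p q A B (fun s => x s - 2 * rinf x s) (fun s => y s + B * rinf x s) t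
        + q * rinf x t = chain (2 * k + 1) p q A B x y t) ∧
    (∀ (p q A B : ℝ) (x y : ℝ → ℝ), Nice x → Nice y → Pos (2 * k + 2) p q B A →
      ∀ t, chain (2 * k + 1) p q B A (fun s => y s + B * rinf x s) (fun s => x s - 2 * rinf x s) t
        = rinf (fun s => (q * y s + chain (2 * k + 1) q (B * q - p) A B x y s)
          + p * rinf x s) t) := by
  have SO : ∀ k, (∀ (p q A B : ℝ) (x y : ℝ → ℝ), Nice x → Nice y → Pos (2 * k + 1) p q A B →
      ∀ t, chain (2 * k) p q A B (fun s => x s - 2 * rinf x s) (fun s => y s + B * rinf x s) t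
        + q * rinf x t = chain (2 * k + 1) p q A B x y t) →
      (∀ (p q A B : ℝ) (x y : ℝ → ℝ), Nice x → Nice y → Pos (2 * k + 2) p q B A →
      ∀ t, chain (2 * k + 1) p q B A (fun s => y s + B * rinf x s) (fun s => x s - 2 * rinf x s) t
        = rinf (fun s => (q * y s + chain (2 * k + 1) q (B * q - p) A B x y s)
          + p * rinf x s) t) := by
    intro k hS p q A B x y hx hy hpos t
    have h := hS q (B * q - p) A B x y hx hy hpos.2
    rw [chain]
    congr 1
    funext s
    rw [← h s]
    ring
  induction k with
  | zero =>
    have hS : (∀ (p q A B : ℝ) (x y : ℝ → ℝ), Nice x → Nice y → Pos (2 * 0 + 1) p q A B →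
      ∀ t, chain (2 * 0) p q A B (fun s => x s - 2 * rinf x s) (fun s => y s + B * rinf x s) t
        + q * rinf x t = chain (2 * 0 + 1) p q A B x y t) := by
      intro p q A B x y hx hy hpos t
      simp only [chain, zero_add, add_zero]
      rw [rinf_mul hx hpos.1]
    exact ⟨hS, SO 0 hS⟩
  | succ k ih =>
    have hS : (∀ (p q A B : ℝ) (x y : ℝ → ℝ), Nice x → Nice y → Pos (2 * (k + 1) + 1) p q A B →
      ∀ t, chain (2 * (k + 1)) p q A B (fun s => x s - 2 * rinf x s)
          (fun s => y s + B * rinf x s) t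
        + q * rinf x t = chain (2 * (k + 1) + 1) p q A B x y t) := by
      intro p q A B x y hx hy hpos t
      have hO := ih.2 q (A * q - p) A B x y hx hy hpos.2
      have hC := chain_nice (2 * k + 1) (A * q - p) (B * (A * q - p) - q) A B hx hy
      have hR : Nice (fun u => (A * q - p) * y u +
          chain (2 * k + 1) (A * q - p) (B * (A * q - p) - q) A B x y u) :=
        ⟨by have := hy.1; have := hC.1; fun_prop, by simp [hy.2, hC.2]⟩
      have hk := key hx hR hpos.1 t
      rw [show 2 * (k + 1) = (2 * k + 1) + 1 by ring, chain]
      simp only [hO]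
      rw [hk]
      rfl
    exact ⟨hS, SO (k + 1) hS⟩

theorem sin_coef (n : ℕ) (p q A B a θ S μ ν : ℝ) (hS : 0 < S) (hμ : 0 ≤ μ) (hν : 0 ≤ ν)
    (hA : A * ν = 2 * Real.cos θ * μ) (hB : B * μ = 2 * Real.cos θ * ν)
    (hp : p * S = μ * Real.sin (a - θ)) (hq : q * S = ν * Real.sin a) (hθ : 0 ≤ θ)
    (ha : 0 ≤ a) :
    (a + n * θ ≤ Real.pi + θ → Pos n p q A B) ∧
      (Real.sin (a + n * θ) = 0 → Qs n p q A B = 0) := by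
  induction n generalizing p q A B a μ ν with
  | zero =>
    refine ⟨fun _ => trivial, fun h => ?_⟩
    have h' : Real.sin a = 0 := by simpa using h
    rw [h', mul_zero] at hq
    exact (mul_eq_zero.1 hq).resolve_right hS.ne'
  | succ n ih =>
    have hnext : (A * q - p) * S = μ * Real.sin (a + θ) := by
      rw [Real.sin_sub] at hp
      rw [Real.sin_add]
      linear_combination A * hq - hp + Real.sin a * hA
    have := ih q (A * q - p) B A (a + θ) ν μ hν hμ hB hA (by rw [add_sub_cancel_right]; exact hq)
      hnext (by linarith)
    have e : a + θ + n * θ = a + ((n + 1 : ℕ) : ℝ) * θ := by push_cast; ring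
    rw [e] at this
    refine ⟨fun h => ⟨?_, this.1 h⟩, this.2⟩
    have hnn : 0 ≤ (n : ℝ) * θ := by positivity
    have hsin : 0 ≤ Real.sin a := Real.sin_nonneg_of_nonneg_of_le_pi ha (by
      push_cast at h; linarith)
    have : 0 ≤ q * S := by rw [hq]; positivity
    exact nonneg_of_mul_nonneg_left this hS

end PitAux

namespace PitAux

section Paths
variable {V : Type*} [NormedAddCommGroup V] [NormedSpace ℝ V] [FiniteDimensional ℝ V]

theorem pitman_apply (a : V) (av : Module.Dual ℝ V) (π : ℝ → V) (t : ℝ) :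
    pitman a av π t = π t - rinf (fun s => av (π s)) t • a := rfl

theorem dual_nice (av : Module.Dual ℝ V) {π : ℝ → V} (h : Continuous π ∧ π 0 = 0) :
    Nice (fun s => av (π s)) :=
  ⟨av.continuous_of_finiteDimensional.comp h.1, by simp [h.2]⟩

theorem pitman_nice (a : V) (av : Module.Dual ℝ V) {π : ℝ → V} (h : Continuous π ∧ π 0 = 0) :
    Continuous (pitman a av π) ∧ pitman a av π 0 = 0 := by
  have hm := rinf_nice (dual_nice av h)
  constructor
  · have h1 := hm.1
    have h2 := h.1
    change Continuous (fun t => π t - rinf (fun s => av (π s)) t • a)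
    fun_prop
  · rw [pitman_apply, h.2, hm.2]; simp

theorem dual_pitman_nonneg (a : V) (av : Module.Dual ℝ V) (hp : av a = 2) {π : ℝ → V}
    (h : Continuous π ∧ π 0 = 0) {t : ℝ} (ht : 0 ≤ t) : 0 ≤ av (pitman a av π t) := by
  have hn := dual_nice av h
  have h1 := rinf_le hn.1 ht le_rfl
  have h2 : rinf (fun s => av (π s)) t ≤ 0 := (rinf_le hn.1 le_rfl ht).trans_eq hn.2
  rw [pitman_apply, map_sub, map_smul, hp, smul_eq_mul]
  linarith

theorem pitman_idem (a : V) (av : Module.Dual ℝ V) (hp : av a = 2) {π : ℝ → V}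
    (h : Continuous π ∧ π 0 = 0) : pitman a av (pitman a av π) = pitman a av π := by
  funext t
  rw [pitman_apply a av (pitman a av π)]
  have hz : rinf (fun s => av (pitman a av π s)) t = 0 := by
    rcases lt_or_ge t 0 with ht | ht
    · exact rinf_neg _ ht
    · have hn := dual_nice av (pitman_nice a av h)
      apply le_antisymm
      · exact (rinf_le hn.1 le_rfl ht).trans_eq hn.2
      · obtain ⟨s, hs, -, e⟩ := rinf_exists hn.1 ht
        rw [e]
        exact dual_pitman_nonneg a av hp h hs
  rw [hz]; simp

variable {B : Type*} (α : B → V) (αv : B → Module.Dual ℝ V)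

theorem pitmanWord_cons (s : B) (l : List B) (π : ℝ → V) :
    pitmanWord α αv (s :: l) π = pitman (α s) (αv s) (pitmanWord α αv l π) := rfl

theorem pitmanWord_append (l l' : List B) (π : ℝ → V) :
    pitmanWord α αv (l ++ l') π = pitmanWord α αv l (pitmanWord α αv l' π) := by
  induction l with
  | nil => rfl
  | cons s l ih => rw [List.cons_append, pitmanWord_cons, ih]; rfl

theorem pitmanWord_nice (l : List B) {π : ℝ → V} (h : Continuous π ∧ π 0 = 0) :
    Continuous (pitmanWord α αv l π) ∧ pitmanWord α αv l π 0 = 0 := by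
  induction l with
  | nil => exact h
  | cons s l ih => exact pitman_nice _ _ ih

theorem alt_snoc_odd {B : Type*} (i j : B) (m : ℕ) :
    alt i j (2 * m + 1) = alt i j (2 * m) ++ [i] := by
  induction m with
  | zero => rfl
  | succ m ih =>
    have h : alt i j (2 * (m + 1) + 1) = i :: j :: alt i j (2 * m + 1) := rfl
    have h' : alt i j (2 * (m + 1)) = i :: j :: alt i j (2 * m) := rfl
    rw [h, ih, h']; rfl

theorem alt_snoc_even {B : Type*} (i j : B) (m : ℕ) :
    alt i j (2 * m + 1 + 1) = alt i j (2 * m + 1) ++ [j] := by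
  rw [alt_snoc_two, alt_snoc_odd]; simp

theorem chain_one (n : ℕ) (C A : ℝ) (x y r : ℝ → ℝ) (t : ℝ) :
    rinf (fun s => (1 * y s + chain n 1 (C * 1 - 0) A C x y s) + 0 * r s) t =
      chain (n + 1) 0 1 C A y x t := by
  simp only [zero_mul, add_zero]
  rfl

/-- One step towards the chain formula for a two-letter alternating product. -/
theorem formula (hpair : ∀ s, αv s (α s) = 2) (i j : B) (n : ℕ)
    (h1 : Pos n 0 1 (-αv i (α j)) (-αv j (α i)))
    (h2 : Pos n 0 1 (-αv j (α i)) (-αv i (α j)))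
    (π : ℝ → V) (h : Continuous π ∧ π 0 = 0) (t : ℝ) :
    pitmanWord α αv (alt i j n) π t = π t
      - chain n 0 1 (-αv i (α j)) (-αv j (α i)) (fun s => αv i (π s)) (fun s => αv j (π s)) t • α i
      - chain (n - 1) 0 1 (-αv j (α i)) (-αv i (α j)) (fun s => αv j (π s))
          (fun s => αv i (π s)) t • α j := by
  induction n generalizing π with
  | zero => simp [alt, chain, pitmanWord]
  | succ n ih =>
    set A := -αv i (α j) with hA
    set C := -αv j (α i) with hC
    have hx := dual_nice (αv i) h
    have hy := dual_nice (αv j) h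
    have ih' := fun π' hπ' => ih (pos_mono _ _ _ _ _ h1) (pos_mono _ _ _ _ _ h2) π' hπ'
    rcases Nat.even_or_odd' n with ⟨k, hk | hk⟩
    · subst hk
      rw [alt_snoc_odd, pitmanWord_append]
      have e : pitmanWord α αv [i] π = pitman (α i) (αv i) π := rfl
      rw [e, ih' _ (pitman_nice _ _ h)]
      have ex : (fun s => αv i (pitman (α i) (αv i) π s)) =
          fun s => αv i (π s) - 2 * rinf (fun s => αv i (π s)) s := by
        funext s
        rw [pitman_apply, map_sub, map_smul, hpair, smul_eq_mul]; ring
      have ey : (fun s => αv j (pitman (α i) (αv i) π s)) =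
          fun s => αv j (π s) + C * rinf (fun s => αv i (π s)) s := by
        funext s
        rw [pitman_apply, map_sub, map_smul, smul_eq_mul, hC]; ring
      rw [ex, ey, pitman_apply, ← (comb k).1 0 1 A C _ _ hx hy h1 t]
      have eβ : chain (2 * k - 1) 0 1 C A
          (fun s => αv j (π s) + C * rinf (fun s => αv i (π s)) s)
          (fun s => αv i (π s) - 2 * rinf (fun s => αv i (π s)) s) t =
          chain (2 * k + 1 - 1) 0 1 C A (fun s => αv j (π s)) (fun s => αv i (π s)) t := by
        cases k with
        | zero => rfl
        | succ k =>
          rw [show 2 * (k + 1) - 1 = 2 * k + 1 by omega,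
            show 2 * (k + 1) + 1 - 1 = 2 * k + 1 + 1 by omega,
            (comb k).2 0 1 A C _ _ hx hy (pos_mono _ _ _ _ _ h2) t]
          exact chain_one ..
      rw [eβ]
      module
    · subst hk
      rw [alt_snoc_even, pitmanWord_append]
      have e : pitmanWord α αv [j] π = pitman (α j) (αv j) π := rfl
      rw [e, ih' _ (pitman_nice _ _ h)]
      have ey : (fun s => αv j (pitman (α j) (αv j) π s)) =
          fun s => αv j (π s) - 2 * rinf (fun s => αv j (π s)) s := by
        funext s
        rw [pitman_apply, map_sub, map_smul, hpair, smul_eq_mul]; ring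
      have ex : (fun s => αv i (pitman (α j) (αv j) π s)) =
          fun s => αv i (π s) + A * rinf (fun s => αv j (π s)) s := by
        funext s
        rw [pitman_apply, map_sub, map_smul, smul_eq_mul, hA]; ring
      rw [ex, ey, pitman_apply]
      have e1 := (comb k).2 0 1 C A _ _ hy hx h1 t
      have e2 := (comb k).1 0 1 C A _ _ hy hx (pos_mono _ _ _ _ _ h2) t
      rw [e1, chain_one, show 2 * k + 1 + 1 - 1 = 2 * k + 1 by omega, ← e2,
        show 2 * k + 1 - 1 = 2 * k by omega]
      module

theorem braid_path (hpair : ∀ s, αv s (α s) = 2) (i j : B) (m : ℕ) (hm : 2 ≤ m)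
    (h : (m = 2 ∧ αv i (α j) = 0 ∧ αv j (α i) = 0) ∨
      (αv i (α j) < 0 ∧ αv j (α i) < 0 ∧
        αv i (α j) * αv j (α i) = 4 * Real.cos (Real.pi / (m : ℝ)) ^ 2))
    (π : ℝ → V) (hπ : Continuous π ∧ π 0 = 0) :
    pitmanWord α αv (alt i j m) π = pitmanWord α αv (alt j i m) π := by
  have coef : ∀ A B : ℝ, ((m = 2 ∧ A = 0 ∧ B = 0) ∨
      (0 < A ∧ 0 < B ∧ A * B = 4 * Real.cos (Real.pi / (m : ℝ)) ^ 2)) →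
      Pos m 0 1 A B ∧ Qs (m - 1) 0 1 A B = 0 := by
    intro A B hAB
    obtain ⟨hs, -, μ, hμ, e1, e2⟩ := dih_facts hm hAB
    have hm0 : (m : ℝ) ≠ 0 := by
      have : (2 : ℝ) ≤ m := by exact_mod_cast hm
      linarith
    have hθ : 0 ≤ Real.pi / (m : ℝ) := by have := Real.pi_pos; positivity
    have sc := fun n => sin_coef n 0 1 A B (Real.pi / m) (Real.pi / m)
      (Real.sin (Real.pi / m)) μ 1 hs hμ.le zero_le_one (by linarith) (by linarith)
      (by simp) (by simp) hθ hθ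
    refine ⟨(sc m).1 (le_of_eq (by field_simp; ring)), (sc (m - 1)).2 ?_⟩
    rw [Nat.cast_sub (by omega), show Real.pi / (m : ℝ) + ((m : ℝ) - (1 : ℕ)) * (Real.pi / m)
      = Real.pi by field_simp; push_cast; ring, Real.sin_pi]
  obtain ⟨p1, q1⟩ := coef (-αv i (α j)) (-αv j (α i)) (by
    rcases h with ⟨a, b, c⟩ | ⟨a, b, c⟩
    · exact Or.inl ⟨a, by simp [b], by simp [c]⟩
    · exact Or.inr ⟨by linarith, by linarith, by linarith⟩)
  obtain ⟨p2, q2⟩ := coef (-αv j (α i)) (-αv i (α j)) (by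
    rcases h with ⟨a, b, c⟩ | ⟨a, b, c⟩
    · exact Or.inl ⟨a, by simp [c], by simp [b]⟩
    · exact Or.inr ⟨by linarith, by linarith, by linarith⟩)
  funext t
  rw [formula α αv hpair i j m p1 p2 π hπ t, formula α αv hpair j i m p2 p1 π hπ t]
  obtain ⟨k, rfl⟩ : ∃ k, m = k + 1 := ⟨m - 1, by omega⟩
  rw [Nat.add_sub_cancel] at q1 q2 ⊢
  rw [chain_drop k _ _ _ _ _ _ q1, chain_drop k _ _ _ _ _ _ q2]
  module

/-- The Pitman transform on the type of continuous paths from zero. -/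
noncomputable def pitX (s : B) : Function.End {π : ℝ → V // Continuous π ∧ π 0 = 0} :=
  fun π => ⟨pitman (α s) (αv s) π.1, pitman_nice _ _ π.2⟩

theorem pitX_prod (l : List B) (π : {π : ℝ → V // Continuous π ∧ π 0 = 0}) :
    (((l.map (pitX α αv)).prod : Function.End _) π).1 = pitmanWord α αv l π.1 := by
  induction l with
  | nil => rfl
  | cons s l ih =>
    rw [List.map_cons, List.prod_cons, pitmanWord_cons, ← ih]
    rfl

theorem pitman_congr (a : V) (av : Module.Dual ℝ V) {T : ℝ} {π π' : ℝ → V}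
    (h : ∀ t ∈ Set.Icc 0 T, π t = π' t) :
    ∀ t ∈ Set.Icc 0 T, pitman a av π t = pitman a av π' t := by
  intro t ht
  unfold pitman
  rw [h t ht, Set.image_congr (g := fun s => av (π' s))]
  intro s hs
  rw [h s ⟨hs.1, hs.2.trans ht.2⟩]

theorem pitmanWord_congr (l : List B) {T : ℝ} {π π' : ℝ → V}
    (h : ∀ t ∈ Set.Icc 0 T, π t = π' t) :
    ∀ t ∈ Set.Icc 0 T, pitmanWord α αv l π t = pitmanWord α αv l π' t := by
  induction l with
  | nil => exact h
  | cons s l ih => exact pitman_congr _ _ ih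

end Paths
end PitAux


/-- Proposition 2.7 of Biane–Bougerol–O'Connell.  For `w ∈ W` with
`L_w = {s : ℓ(σ_s w) < ℓ(w)}` and `R_w = {s : ℓ(w σ_s) < ℓ(w)}`:
(a) `P_w π` lies in `∩_{s ∈ L_w} H_s`; (b) `P_{α_s} ∘ P_w = P_w` for `s ∈ L_w`;
(c) `P_w ∘ P_{α_s} = P_w` for `s ∈ R_w`.  Here `P_w` is computed along any
reduced word `l` for `w`. -/
theorem pitmanWord_left_right_descents
    {V : Type*} [NormedAddCommGroup V] [NormedSpace ℝ V] [FiniteDimensional ℝ V]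
    (T : ℝ) (hT : 0 < T)
    {B : Type*} [Fintype B] {W : Type*} [Group W]
    (M : CoxeterMatrix B) (cs : CoxeterSystem M W)
    (α : B → V) (αv : B → Module.Dual ℝ V)
    (hpair : ∀ s, αv s (α s) = 2)
    (ρ : W →* (V ≃ₗ[ℝ] V)) (hρinj : Function.Injective ρ)
    (hρs : ∀ s v, ρ (cs.simple s) v = v - αv s v • α s)
    (hM : ∀ s s' : B, s ≠ s' →
      (M s s' = 2 ∧ αv s (α s') = 0 ∧ αv s' (α s) = 0) ∨
      (αv s (α s') < 0 ∧ αv s' (α s) < 0 ∧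
        αv s (α s') * αv s' (α s) = 4 * Real.cos (Real.pi / (M s s' : ℝ)) ^ 2))
    (w : W) (l : List B) (hl : cs.wordProd l = w) (hlred : cs.IsReduced l)
    (π : ℝ → V) (hcont : ContinuousOn π (Set.Icc 0 T)) (h0 : π 0 = 0) :
    (∀ s : B, cs.length (cs.simple s * w) < cs.length w →
      ∀ t ∈ Set.Icc 0 T, 0 ≤ αv s (pitmanWord α αv l π t)) ∧
    (∀ s : B, cs.length (cs.simple s * w) < cs.length w →
      ∀ t ∈ Set.Icc 0 T,
        pitman (α s) (αv s) (pitmanWord α αv l π) t = pitmanWord α αv l π t) ∧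
    (∀ s : B, cs.length (w * cs.simple s) < cs.length w →
      ∀ t ∈ Set.Icc 0 T,
        pitmanWord α αv l (pitman (α s) (αv s) π) t = pitmanWord α αv l π t) := by
  classical
  have hword : ∀ l l' : List B, cs.IsReduced l → cs.IsReduced l' →
      cs.wordProd l = cs.wordProd l' → ∀ η : ℝ → V, Continuous η ∧ η 0 = 0 →
      pitmanWord α αv l η = pitmanWord α αv l' η := by
    intro l l' hl hl' he η hη
    have := PitAux.matsumoto cs (PitAux.pitX α αv)
      (PitAux.order_lemma cs α αv hpair ρ hρs hM)
      (by
        intro i j hij h0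
        funext p
        apply Subtype.ext
        rw [PitAux.pitX_prod, PitAux.pitX_prod]
        have h1 := M.off_diagonal i j hij
        exact PitAux.braid_path α αv hpair i j (M i j) (by omega) (hM i j hij) p.1 p.2)
      l.length l l' rfl hl hl' he
    have h2 := congrArg Subtype.val (congrFun this ⟨η, hη⟩)
    rwa [PitAux.pitX_prod, PitAux.pitX_prod] at h2
  -- replace the path by a globally continuous one
  obtain ⟨η, hη, hηπ⟩ : ∃ η : ℝ → V, (Continuous η ∧ η 0 = 0) ∧
      ∀ t ∈ Set.Icc 0 T, π t = η t := by
    refine ⟨Set.IccExtend hT.le (fun t : Set.Icc (0 : ℝ) T => π t), ⟨?_, ?_⟩, ?_⟩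
    · exact (continuousOn_iff_continuous_restrict.1 hcont).Icc_extend'
    · rw [Set.IccExtend_of_mem hT.le _ ⟨le_rfl, hT.le⟩]; exact h0
    · intro t ht
      rw [Set.IccExtend_of_mem hT.le _ ht]
  have hcong := PitAux.pitmanWord_congr α αv l hηπ
  subst hl
  have left : ∀ s : B, cs.length (cs.simple s * cs.wordProd l) < cs.length (cs.wordProd l) →
      ∃ κ : ℝ → V, (Continuous κ ∧ κ 0 = 0) ∧
        pitmanWord α αv l η = pitman (α s) (αv s) κ := by
    intro s hs
    obtain ⟨l', hl', hw⟩ := cs.exists_isReduced (cs.simple s * cs.wordProd l)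
    have hlen := (cs.isLeftDescent_iff).1 hs
    have hprod : cs.wordProd (s :: l') = cs.wordProd l := by
      rw [cs.wordProd_cons, ← hw]; simp
    have hred : cs.IsReduced (s :: l') := by
      unfold CoxeterSystem.IsReduced
      rw [hprod, ← hlen, hw, hl'.eq]; simp
    exact ⟨pitmanWord α αv l' η, PitAux.pitmanWord_nice α αv l' hη,
      hword l (s :: l') hlred hred hprod.symm η hη⟩
  refine ⟨?_, ?_, ?_⟩
  · intro s hs t ht
    obtain ⟨κ, hκ, e⟩ := left s hs
    rw [hcong t ht, e]
    exact PitAux.dual_pitman_nonneg _ _ (hpair s) hκ ht.1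
  · intro s hs t ht
    obtain ⟨κ, hκ, e⟩ := left s hs
    rw [PitAux.pitman_congr _ _ hcong t ht, hcong t ht, e,
      PitAux.pitman_idem _ _ (hpair s) hκ]
  · intro s hs t ht
    obtain ⟨l', hl', hw⟩ := cs.exists_isReduced (cs.wordProd l * cs.simple s)
    have hlen := (cs.isRightDescent_iff).1 hs
    have hprod : cs.wordProd (l' ++ [s]) = cs.wordProd l := by
      rw [cs.wordProd_append, ← hw]; simp
    have hred : cs.IsReduced (l' ++ [s]) := by
      unfold CoxeterSystem.IsReduced
      rw [hprod, ← hlen, hw, hl'.eq]; simp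
    have e := hword l (l' ++ [s]) hlred hred hprod.symm
    rw [PitAux.pitmanWord_congr α αv l (PitAux.pitman_congr (α s) (αv s) hηπ) t ht, hcong t ht,
      e _ (PitAux.pitman_nice _ _ hη), e _ hη, PitAux.pitmanWord_append,
      PitAux.pitmanWord_append]
    have e1 : ∀ κ : ℝ → V, pitmanWord α αv [s] κ = pitman (α s) (αv s) κ := fun _ => rfl
    rw [e1, e1, PitAux.pitman_idem _ _ (hpair s) hη]
end
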